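/- arXiv:2308.05066 — 2 statements merged into one kernel-verified Lean document; each statement's English description precedes it below -/
import Mathlib

section
/- Let k be a field of characteristic 0, n ≥ 3, a_1, …, a_n ≥ 1 integers, and B = B_{k;a_1,…,a_n} the Pham–Brieskorn ring with its ℕ-grading. Then: (a) the integers L/L_1, …, L/L_n are pairwise relatively prime; (b) e(B) = 1 and ē(B) = ∏_{i=1}^n (L/L_i); (c) B is saturated in codimension 1 if and only if L_i = L for every i; (d) for every positive divisor d of ∏_{i=1}^n (L/L_i), there is a ring isomorphism from the Veronese subring B^{(d)} onto B_{k;a_1',…,a_n'} that maps homogeneous elements to homogeneous elements, where a_i' = gcd(a_i, L_i) · ((L/L_i)/gcd(d, L/L_i)) for each i. -/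
noncomputable section

/-- A derivation is locally nilpotent. -/
def IsLND {R : Type*} [CommRing R] (D : Derivation ℤ R R) : Prop :=
  ∀ b : R, ∃ n : ℕ, 0 < n ∧ (⇑D)^[n] b = 0

/-- Kernel of a derivation, as a subring. -/
def kerDer {R : Type*} [CommRing R] (D : Derivation ℤ R R) : Subring R where
  carrier := {x | D x = 0}
  one_mem' := by simp
  mul_mem' := by
    intro a b ha hb
    simp only [Set.mem_setOf_eq] at *
    rw [Derivation.leibniz, ha, hb]
    simp
  add_mem' := by
    intro a b ha hb
    simp only [Set.mem_setOf_eq] at *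
    rw [map_add, ha, hb, add_zero]
  zero_mem' := by simp
  neg_mem' := by
    intro a ha
    simp only [Set.mem_setOf_eq] at *
    rw [map_neg, ha, neg_zero]

section Graded

variable {G : Type*} [AddCommGroup G] {B : Type*} [CommRing B]

/-- The Veronese subring `B^{(H)} = ⊕_{i ∈ H} B_i` of a `G`-graded ring,
realized as the subring generated by the homogeneous elements whose degree lies in `H`. -/
def verSub (𝒜 : G → AddSubgroup B) (H : AddSubgroup G) : Subring B :=
  Subring.closure (⋃ i ∈ (H : Set G), (𝒜 i : Set B))

/-- 𝔾(B): the subgroup of G generated by the degrees of nonzero homogeneous elements. -/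
def Gsub (𝒜 : G → AddSubgroup B) : AddSubgroup G :=
  AddSubgroup.closure { i : G | 𝒜 i ≠ ⊥ }

/-- `H ∈ 𝕋(B)`: the quotient `𝔾(B)/(H ∩ 𝔾(B))` is torsion. -/
def Tmem (𝒜 : G → AddSubgroup B) (H : AddSubgroup G) : Prop :=
  ∀ g ∈ Gsub 𝒜, ∃ n : ℕ, 0 < n ∧ n • g ∈ H

/-- A homogeneous derivation of `B`. -/
def IsHomogDer (𝒜 : G → AddSubgroup B) (D : Derivation ℤ B B) : Prop :=
  ∃ d : G, ∀ (i : G) (x : B), x ∈ 𝒜 i → D x ∈ 𝒜 (i + d)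

/-- A homogeneous derivation of a graded subring `S` of `B`. -/
def IsHomogDerOn (𝒜 : G → AddSubgroup B) (S : Subring B) (D : Derivation ℤ S S) : Prop :=
  ∃ d : G, ∀ (i : G) (x : S), (x : B) ∈ 𝒜 i → ((D x : S) : B) ∈ 𝒜 (i + d)

/-- 𝕄̄(B,p): the subgroup of G generated by the degrees i with B_i ⊄ p. -/
def Mbar (𝒜 : G → AddSubgroup B) (p : Ideal B) : AddSubgroup G :=
  AddSubgroup.closure { i : G | ¬ (𝒜 i : Set B) ⊆ (p : Set B) }

/-- A prime ideal of height 1. -/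
def heightOne {R : Type*} [CommRing R] (p : Ideal R) : Prop :=
  p.IsPrime ∧ (∃ q : Ideal R, q.IsPrime ∧ q < p) ∧
    ∀ q r : Ideal R, q.IsPrime → r.IsPrime → q < r → r < p → False

open Classical in
/-- 𝔾̄(B). -/
def Gbar (𝒜 : G → AddSubgroup B) : AddSubgroup G :=
  if ∃ p : Ideal B, heightOne p then ⨅ p : {p : Ideal B // heightOne p}, Mbar 𝒜 p.1
  else Gsub 𝒜

end Graded

/-- The nonnegative generator of a subgroup of ℤ (so that the gcd of a set of integers
is `groupGen` of the subgroup it generates, and the lcm of a set of integers is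
`groupGen` of the intersection of the subgroups its elements generate). -/
noncomputable def groupGen (H : AddSubgroup ℤ) : ℕ :=
  (Submodule.IsPrincipal.generator (AddSubgroup.toIntSubmodule H : Ideal ℤ)).natAbs

section ZGraded

variable {B : Type*} [CommRing B]

/-- The set of height-1 homogeneous prime ideals of a ℤ-graded ring. -/
def homogHt1 (𝒜 : ℤ → AddSubgroup B) : Set (Ideal B) :=
  { p | heightOne p ∧ p = Ideal.span { x : B | x ∈ p ∧ ∃ i : ℤ, x ∈ 𝒜 i } }

/-- The saturation index e(B) = gcd{ n : B_n ≠ 0 } of a ℤ-graded ring. -/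
noncomputable def eB (𝒜 : ℤ → AddSubgroup B) : ℕ :=
  groupGen (Gsub 𝒜)

open Classical in
/-- The codimension-1 saturation index ē(B) = lcm{ e(B/p) : p ∈ Z } (Z the set of
height-1 homogeneous primes) if Z ≠ ∅, and ē(B) = e(B) if Z = ∅.  Here
e(B/p)ℤ = 𝕄̄(B,p), so the lcm is computed as the intersection of the 𝕄̄(B,p). -/
noncomputable def ebarB (𝒜 : ℤ → AddSubgroup B) : ℕ :=
  if (homogHt1 𝒜).Nonempty then groupGen (⨅ p : homogHt1 𝒜, Mbar 𝒜 p.1) else eB 𝒜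

end ZGraded

section PB

/-- The Pham–Brieskorn ring B_{k;a₁,…,aₙ} = k[X₁,…,Xₙ]/(X₁^{a₁} + ⋯ + Xₙ^{aₙ}). -/
noncomputable abbrev PBring (k : Type*) [Field k] {n : ℕ} (a : Fin n → ℕ) :=
  MvPolynomial (Fin n) k ⧸
    Ideal.span ({∑ i : Fin n, MvPolynomial.X i ^ a i} : Set (MvPolynomial (Fin n) k))

/-- L = lcm(a₁,…,aₙ). -/
def Ltot {n : ℕ} (a : Fin n → ℕ) : ℕ := Finset.univ.lcm a

/-- Lᵢ = lcm{ aⱼ : j ≠ i }. -/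
def Lpart {n : ℕ} (a : Fin n → ℕ) (i : Fin n) : ℕ := (Finset.univ.erase i).lcm a

/-- The degree-m part of the Pham–Brieskorn ring (for its ℕ-grading, in which the
image xᵢ of Xᵢ is homogeneous of degree L/aᵢ): the image of the space of weighted
homogeneous polynomials of weighted degree m. -/
noncomputable def PBpiece (k : Type*) [Field k] {n : ℕ} (a : Fin n → ℕ) (m : ℤ) :
    AddSubgroup (PBring k a) :=
  if 0 ≤ m then
    AddSubgroup.map
      (Ideal.Quotient.mk _).toAddMonoidHom
      ((MvPolynomial.weightedHomogeneousSubmodule k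
          (fun i => Ltot a / a i) m.toNat).toAddSubgroup)
  else ⊥

/-- The d-th Veronese subring of the Pham–Brieskorn ring. -/
noncomputable def PBver (k : Type*) [Field k] {n : ℕ} (a : Fin n → ℕ) (d : ℕ) :
    Subring (PBring k a) :=
  Subring.closure (⋃ m ∈ {m : ℤ | (d : ℤ) ∣ m}, (PBpiece k a m : Set (PBring k a)))

/-- The exponents a′ of the Pham–Brieskorn ring isomorphic to the d-th Veronese subring:
aᵢ′ = gcd(aᵢ, Lᵢ) · ((L/Lᵢ)/gcd(d, L/Lᵢ)). -/
def PBexp {n : ℕ} (a : Fin n → ℕ) (d : ℕ) : Fin n → ℕ :=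
  fun i => Nat.gcd (a i) (Lpart a i) * ((Ltot a / Lpart a i) / Nat.gcd d (Ltot a / Lpart a i))

end PB

namespace PBaux

/-! ### Arithmetic -/

section Arith

variable {n : ℕ} (a : Fin n → ℕ)

lemma Ltot_pos (ha : ∀ i, 1 ≤ a i) : 0 < Ltot a := by
  refine Nat.pos_of_ne_zero fun h => ?_
  rw [Ltot, Finset.lcm_eq_zero_iff] at h
  obtain ⟨i, -, hi⟩ := h
  have := ha i
  omega

lemma Lpart_dvd (i : Fin n) : Lpart a i ∣ Ltot a :=
  Finset.lcm_dvd fun _ _ => Finset.dvd_lcm (Finset.mem_univ _)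

lemma dvd_Ltot (i : Fin n) : a i ∣ Ltot a := Finset.dvd_lcm (Finset.mem_univ _)

lemma dvd_Lpart {i j : Fin n} (h : j ≠ i) : a j ∣ Lpart a i :=
  Finset.dvd_lcm (by simp [h])

lemma Lpart_pos (ha : ∀ i, 1 ≤ a i) (i : Fin n) : 0 < Lpart a i :=
  Nat.pos_of_dvd_of_pos (Lpart_dvd a i) (Ltot_pos a ha)

lemma lcm_Lpart {i j : Fin n} (h : i ≠ j) : Nat.lcm (Lpart a i) (Lpart a j) = Ltot a := by
  refine Nat.dvd_antisymm (Nat.lcm_dvd (Lpart_dvd a i) (Lpart_dvd a j)) ?_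
  refine Finset.lcm_dvd fun l _ => ?_
  by_cases hl : l = i
  · exact (dvd_Lpart a (hl ▸ h)).trans (Nat.dvd_lcm_right _ _)
  · exact (dvd_Lpart a hl).trans (Nat.dvd_lcm_left _ _)

lemma lcm_self_Lpart (i : Fin n) : Nat.lcm (a i) (Lpart a i) = Ltot a := by
  refine Nat.dvd_antisymm (Nat.lcm_dvd (dvd_Ltot a i) (Lpart_dvd a i)) ?_
  refine Finset.lcm_dvd fun l _ => ?_
  by_cases hl : l = i
  · exact hl ▸ Nat.dvd_lcm_left _ _
  · exact (dvd_Lpart a hl).trans (Nat.dvd_lcm_right _ _)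

lemma coprime_lcm_div {x y : ℕ} (hx : 0 < x) (hy : 0 < y) :
    Nat.Coprime (Nat.lcm x y / x) (Nat.lcm x y / y) := by
  have h1 : Nat.lcm x y / x = y / Nat.gcd x y := by
    apply Nat.div_eq_of_eq_mul_right hx
    rw [Nat.lcm, Nat.mul_div_assoc _ (Nat.gcd_dvd_right x y)]
  have h2 : Nat.lcm x y / y = x / Nat.gcd x y := by
    apply Nat.div_eq_of_eq_mul_right hy
    rw [Nat.lcm, mul_comm x y, Nat.mul_div_assoc _ (Nat.gcd_dvd_left x y)]
  rw [h1, h2]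
  exact (Nat.coprime_div_gcd_div_gcd (Nat.gcd_pos_of_pos_left _ hx)).symm

lemma coprime_q (ha : ∀ i, 1 ≤ a i) {i j : Fin n} (h : i ≠ j) :
    Nat.Coprime (Ltot a / Lpart a i) (Ltot a / Lpart a j) := by
  rw [← lcm_Lpart a h]
  exact coprime_lcm_div (Lpart_pos a ha i) (Lpart_pos a ha j)

lemma q_dvd_d (ha : ∀ i, 1 ≤ a i) {i j : Fin n} (h : j ≠ i) :
    Ltot a / Lpart a i ∣ Ltot a / a j := by
  refine ⟨Lpart a i / a j, ?_⟩
  rw [Nat.div_mul_div_comm (Lpart_dvd a i) (dvd_Lpart a h)]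
  rw [mul_comm (Ltot a), Nat.mul_div_mul_left _ _ (Lpart_pos a ha i)]

/-- `a i = gcd(a i, L i) * q i`. -/
lemma a_eq (ha : ∀ i, 1 ≤ a i) (i : Fin n) :
    a i = Nat.gcd (a i) (Lpart a i) * (Ltot a / Lpart a i) := by
  have h := Nat.gcd_mul_lcm (a i) (Lpart a i)
  rw [lcm_self_Lpart] at h
  have hp := Lpart_pos a ha i
  rw [← Nat.mul_div_assoc _ (Lpart_dvd a i), h, Nat.mul_div_cancel _ hp]

lemma dvd_of_dvd_d (ha : ∀ i, 1 ≤ a i) (s : Finset (Fin n)) (hs : s.Nonempty) (N : ℕ)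
    (hN : ∀ j ∈ s, N ∣ Ltot a / a j) : N ∣ Ltot a / s.lcm a := by
  have hL := Ltot_pos a ha
  obtain ⟨j0, hj0⟩ := hs
  have hNL : N ∣ Ltot a := (hN j0 hj0).trans (Nat.div_dvd_of_dvd (dvd_Ltot a j0))
  have h1 : s.lcm a ∣ Ltot a / N := by
    refine Finset.lcm_dvd fun j hj => ?_
    obtain ⟨c, hc⟩ := hN j hj
    refine Nat.dvd_div_of_mul_dvd ⟨c, ?_⟩
    rw [mul_right_comm, ← hc, Nat.div_mul_cancel (dvd_Ltot a j)]
  obtain ⟨c, hc⟩ := h1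
  have h2 : Ltot a = s.lcm a * (N * c) := by
    rw [mul_left_comm, ← hc, Nat.mul_div_cancel' hNL]
  have h3 : 0 < s.lcm a := by
    rcases Nat.eq_zero_or_pos (s.lcm a) with h | h
    · rw [h] at h2; omega
    · exact h
  rw [h2, Nat.mul_div_cancel_left _ h3]
  exact dvd_mul_right _ _

lemma coprime_q_d (ha : ∀ i, 1 ≤ a i) (i : Fin n) :
    Nat.Coprime (Ltot a / Lpart a i) (Ltot a / a i) := by
  have := dvd_of_dvd_d a ha Finset.univ ⟨i, Finset.mem_univ _⟩
    (Nat.gcd (Ltot a / Lpart a i) (Ltot a / a i)) (by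
      intro j _
      by_cases h : j = i
      · subst h; exact Nat.gcd_dvd_right _ _
      · exact (Nat.gcd_dvd_left _ _).trans (q_dvd_d a ha h))
  rw [show Finset.univ.lcm a = Ltot a from rfl, Nat.div_self (Ltot_pos a ha)] at this
  exact Nat.dvd_one.mp this

lemma subgroup_mem_of_d (ha : ∀ i, 1 ≤ a i) (s : Finset (Fin n)) (hs : s.Nonempty)
    (H : AddSubgroup ℤ) (hH : ∀ j ∈ s, ((Ltot a / a j : ℕ) : ℤ) ∈ H) :
    ((Ltot a / s.lcm a : ℕ) : ℤ) ∈ H := by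
  obtain ⟨g, rfl⟩ := Int.subgroup_cyclic H
  rw [← AddSubgroup.zmultiples_eq_closure] at *
  simp only [Int.mem_zmultiples_iff] at *
  rw [← Int.natAbs_dvd, Int.natCast_dvd_natCast]
  refine dvd_of_dvd_d a ha s hs _ fun j hj => ?_
  have := hH j hj
  rwa [← Int.natAbs_dvd, Int.natCast_dvd_natCast] at this

lemma groupGen_zmultiples (m : ℕ) : groupGen (AddSubgroup.zmultiples (m : ℤ)) = m := by
  unfold groupGen
  have h : (AddSubgroup.toIntSubmodule (AddSubgroup.zmultiples (m : ℤ)) : Ideal ℤ)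
      = Ideal.span {(m : ℤ)} := by
    ext x
    rw [Ideal.mem_span_singleton]
    exact Int.mem_zmultiples_iff
  have h2 := Ideal.span_singleton_generator
    (AddSubgroup.toIntSubmodule (AddSubgroup.zmultiples (m : ℤ)) : Ideal ℤ)
  have h3 := Ideal.span_singleton_eq_span_singleton.mp (h2.trans h)
  rw [Int.associated_iff_natAbs] at h3
  exact h3

end Arith

/-! ### Heights -/

lemma heightOne_iff {R : Type*} [CommRing R] [IsNoetherianRing R] (p : Ideal R) [hp : p.IsPrime] :
    heightOne p ↔ p.height = 1 := by
  constructor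
  · rintro ⟨-, ⟨q, hq, hqp⟩, h⟩
    apply le_antisymm
    · have : p.height ≤ (1 : ℕ) := by
        rw [Ideal.height_le_iff]
        intro q hq hqp
        have : q.height = 0 := by
          rw [Ideal.height_eq_zero_iff, minimalPrimes_eq_minimals]
          refine ⟨hq, fun r hr hrq => ?_⟩
          by_contra hc
          exact h r q hr hq (lt_of_le_not_ge hrq hc) hqp
        simp [this]
      simpa using this
    · have := Ideal.height_add_one_le_of_lt_of_isPrime hqp
      exact le_trans (by simp) this
  · intro h
    refine ⟨hp, ?_, ?_⟩
    · by_contra hc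
      push Not at hc
      have : p.height = 0 := by
        rw [Ideal.height_eq_zero_iff, minimalPrimes_eq_minimals]
        refine ⟨hp, fun r hr hrq => ?_⟩
        by_contra hc'
        exact hc r hr (lt_of_le_not_ge hrq hc')
      simp [this] at h
    · intro q r hq hr hqr hrp
      have h1 := Ideal.height_add_one_le_of_lt_of_isPrime hqr
      have h2 := Ideal.height_add_one_le_of_lt_of_isPrime hrp
      rw [h] at h2
      have h3 : (1 : ℕ∞) ≤ r.height := le_trans (by simp) h1
      have h4 : (1 : ℕ∞) + 1 ≤ 1 := le_trans (by gcongr) h2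
      norm_num at h4

section Geometry

open MvPolynomial

variable {k : Type*} [Field k] {n : ℕ} (a : Fin n → ℕ)

/-- The polynomial `∑ X_i ^ a_i`. -/
abbrev PF (k : Type*) [Field k] {n : ℕ} (a : Fin n → ℕ) : MvPolynomial (Fin n) k :=
  ∑ i : Fin n, X i ^ a i

/-- The quotient map. -/
abbrev PM (k : Type*) [Field k] {n : ℕ} (a : Fin n → ℕ) :
    MvPolynomial (Fin n) k →+* PBring k a :=
  Ideal.Quotient.mk (Ideal.span {PF k a})

lemma PM_surj : Function.Surjective (PM k a) := Ideal.Quotient.mk_surjective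

lemma PM_PF : PM k a (PF k a) = 0 :=
  Ideal.Quotient.eq_zero_iff_mem.mpr (Ideal.subset_span rfl)

/-- Kill the variables in `s`. -/
def ev (k : Type*) [Field k] {n : ℕ} (s : Finset (Fin n)) :
    MvPolynomial (Fin n) k →ₐ[k] MvPolynomial (Fin n) k :=
  aeval (fun j => if j ∈ s then 0 else X j)

/-- The prime ideal generated by the variables in `s`. -/
def KI (k : Type*) [Field k] {n : ℕ} (s : Finset (Fin n)) : Ideal (MvPolynomial (Fin n) k) :=
  RingHom.ker (ev k s)

instance (s : Finset (Fin n)) : (KI k s).IsPrime := RingHom.ker_isPrime _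

lemma X_mem_KI {s : Finset (Fin n)} {i : Fin n} (h : i ∈ s) : (X i : MvPolynomial (Fin n) k) ∈ KI k s := by
  rw [KI, RingHom.mem_ker]
  simp [ev, h]

lemma X_notMem_KI {s : Finset (Fin n)} {i : Fin n} (h : i ∉ s) :
    (X i : MvPolynomial (Fin n) k) ∉ KI k s := by
  rw [KI, RingHom.mem_ker]
  simp [ev, h]

lemma PF_notMem_KI (ha : ∀ i, 1 ≤ a i) {s : Finset (Fin n)} {l : Fin n} (h : l ∉ s) :
    PF k a ∉ KI k s := by
  rw [KI, RingHom.mem_ker]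
  intro h0
  have h1 := congrArg (eval (Pi.single l (1 : k))) h0
  rw [map_zero, PF, map_sum, map_sum, Finset.sum_eq_single l] at h1
  · simp [ev, h] at h1
  · intro j _ hj
    have := ha j
    by_cases hjs : j ∈ s
    · simp [ev, hjs, show a j ≠ 0 by omega]
    · simp [ev, hjs, show a j ≠ 0 by omega, hj]
  · simp

lemma KI_le {s : Finset (Fin n)} {P : Ideal (MvPolynomial (Fin n) k)}
    (h : ∀ t ∈ s, (X t : MvPolynomial (Fin n) k) ∈ P) : KI k s ≤ P := by
  intro f hf
  have h1 : (Ideal.Quotient.mkₐ k P).comp (ev k s) = Ideal.Quotient.mkₐ k P := by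
    ext j
    by_cases hj : j ∈ s
    · simp [ev, hj, (Ideal.Quotient.eq_zero_iff_mem.mpr (h j hj))]
    · simp [ev, hj]
  have h2 := DFunLike.congr_fun h1 f
  rw [KI, RingHom.mem_ker] at hf
  rw [AlgHom.comp_apply, show ev k s f = 0 from hf, map_zero] at h2
  exact Ideal.Quotient.eq_zero_iff_mem.mp h2.symm

lemma KI_height {s : Finset (Fin n)} : (s.card : ℕ∞) ≤ (KI k s).height := by
  induction s using Finset.induction_on with
  | empty => simp
  | insert t s ht ih =>
    have hlt : KI k s < KI k (insert t s) := by
      refine lt_of_le_of_ne (KI_le fun u hu => X_mem_KI (by simp [hu])) fun h => ?_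
      exact X_notMem_KI ht (h ▸ X_mem_KI (by simp) : (X t : MvPolynomial (Fin n) k) ∈ KI k s)
    have := Ideal.height_add_one_le_of_lt_of_isPrime hlt
    rw [Finset.card_insert_of_notMem ht]
    push_cast
    exact le_trans (by gcongr) this

lemma height_ge (ha : ∀ i, 1 ≤ a i) {s : Finset (Fin n)} {l : Fin n} (h : l ∉ s)
    (P : Ideal (MvPolynomial (Fin n) k)) [P.IsPrime]
    (hs : ∀ t ∈ s, (X t : MvPolynomial (Fin n) k) ∈ P) (hF : PF k a ∈ P) :
    (s.card : ℕ∞) + 1 ≤ P.height := by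
  have hlt : KI k s < P := by
    refine lt_of_le_of_ne (KI_le hs) fun h' => ?_
    exact PF_notMem_KI a ha h (h' ▸ hF)
  exact le_trans (by gcongr; exact KI_height) (Ideal.height_add_one_le_of_lt_of_isPrime hlt)

lemma card_le_height (ha : ∀ i, 1 ≤ a i) {s : Finset (Fin n)} {l : Fin n} (h : l ∉ s)
    (p : Ideal (PBring k a)) [p.IsPrime] (hs : ∀ t ∈ s, PM k a (X t) ∈ p) :
    (s.card : ℕ∞) ≤ p.height := by
  have hF : PF k a ∈ p.comap (PM k a) := by
    rw [Ideal.mem_comap, PM_PF]; exact p.zero_mem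
  have h1 := height_ge a ha h (p.comap (PM k a)) hs hF
  have h2 := Ideal.height_le_height_add_one_of_mem hF
  have h3 : (p.comap (PM k a)).map (Ideal.Quotient.mk (Ideal.span {PF k a})) = p :=
    Ideal.map_comap_of_surjective _ (PM_surj a) p
  have h2' : (p.comap (PM k a)).height ≤ p.height + 1 := by
    rwa [h3] at h2
  exact (ENat.add_le_add_iff_right (by simp)).mp (h1.trans h2')

lemma not_two (hn : 3 ≤ n) (ha : ∀ i, 1 ≤ a i) (p : Ideal (PBring k a)) (hp : heightOne p)
    {i j : Fin n} (hij : i ≠ j) (hi : PM k a (X i) ∈ p) : PM k a (X j) ∉ p := by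
  intro hj
  have := hp.1
  have h1 := (heightOne_iff p).mp hp
  obtain ⟨l, hl⟩ : ∃ l, l ∉ ({i, j} : Finset (Fin n)) := by
    by_contra hc
    push Not at hc
    have h2 := Finset.card_le_card (fun x _ => hc x : (Finset.univ : Finset (Fin n)) ⊆ _)
    rw [Finset.card_univ, Fintype.card_fin] at h2
    have := Finset.card_le_two (a := i) (b := j)
    omega
  have h2 := card_le_height a ha hl p (by
    intro t ht
    simp only [Finset.mem_insert, Finset.mem_singleton] at ht
    rcases ht with rfl | rfl <;> assumption)
  rw [h1, Finset.card_pair hij] at h2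
  norm_num at h2

lemma mem_piece (m : ℤ) (y : PBring k a) : y ∈ PBpiece k a m ↔
    (m < 0 ∧ y = 0) ∨ (0 ≤ m ∧ ∃ f : MvPolynomial (Fin n) k,
      IsWeightedHomogeneous (fun i => Ltot a / a i) f m.toNat ∧ PM k a f = y) := by
  unfold PBpiece
  split_ifs with h
  · have : ¬ m < 0 := by omega
    simp only [this, h, false_and, true_and, false_or]
    rfl
  · have : m < 0 := by omega
    simp [this, h]

lemma PM_mem_piece {f : MvPolynomial (Fin n) k} {m : ℕ}
    (h : IsWeightedHomogeneous (fun i => Ltot a / a i) f m) : PM k a f ∈ PBpiece k a m := by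
  rw [mem_piece]
  exact Or.inr ⟨by simp, f, by simpa using h, rfl⟩

lemma X_mem_piece (i : Fin n) : PM k a (X i) ∈ PBpiece k a ((Ltot a / a i : ℕ) : ℤ) :=
  PM_mem_piece a (isWeightedHomogeneous_X k _ i)

attribute [local instance] MvPolynomial.weightedGradedAlgebra

lemma exists_prime (hn : 3 ≤ n) (ha : ∀ i, 1 ≤ a i) (i : Fin n) :
    ∃ p ∈ homogHt1 (PBpiece k a), PM k a (X i) ∈ p := by
  classical
  -- the irrelevant ideal shows properness
  have hne : Ideal.span {(X i : MvPolynomial (Fin n) k), PF k a} ≠ ⊤ := by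
    intro h
    have hle : Ideal.span {(X i : MvPolynomial (Fin n) k), PF k a} ≤ KI k Finset.univ := by
      rw [Ideal.span_le]
      rintro f (rfl | rfl)
      · exact X_mem_KI (Finset.mem_univ _)
      · refine Ideal.sum_mem _ fun j _ => Ideal.pow_mem_of_mem _ (X_mem_KI (Finset.mem_univ _)) _ ?_
        exact ha j
    rw [h, top_le_iff] at hle
    exact Ideal.IsPrime.ne_top inferInstance hle
  obtain ⟨P, hP⟩ := Ideal.nonempty_minimalPrimes hne
  have hPp : P.IsPrime := hP.1.1
  have hXP : (X i : MvPolynomial (Fin n) k) ∈ P := hP.1.2 (Ideal.subset_span (by simp))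
  have hFP : PF k a ∈ P := hP.1.2 (Ideal.subset_span (by simp))
  let 𝒜 := weightedHomogeneousSubmodule k (fun i => Ltot a / a i)
  have hFh : IsWeightedHomogeneous (fun i => Ltot a / a i) (PF k a) (Ltot a) := by
    refine IsWeightedHomogeneous.sum _ _ _ fun j _ => ?_
    have := (isWeightedHomogeneous_X k (fun i => Ltot a / a i) j).pow (a j)
    simpa [Nat.mul_div_cancel' (dvd_Ltot a j)] using this
  have hPh : (P.homogeneousCore 𝒜).toIdeal = P := by
    apply le_antisymm (Ideal.toIdeal_homogeneousCore_le 𝒜 P)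
    refine hP.2 ⟨hPp.homogeneousCore, ?_⟩ (Ideal.toIdeal_homogeneousCore_le 𝒜 P)
    rw [Ideal.span_le]
    rintro f (rfl | rfl)
    · exact Ideal.mem_homogeneousCore_of_homogeneous_of_mem ⟨_, isWeightedHomogeneous_X k _ i⟩ hXP
    · exact Ideal.mem_homogeneousCore_of_homogeneous_of_mem ⟨_, hFh⟩ hFP
  have hspan : P = Ideal.span {f | f ∈ P ∧ SetLike.IsHomogeneousElem 𝒜 f} := by
    apply le_antisymm
    · conv_lhs => rw [← hPh]
      refine Ideal.span_le.mpr ?_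
      rintro _ ⟨⟨f, hf⟩, hfP, rfl⟩
      exact Ideal.subset_span ⟨hfP, hf⟩
    · rw [Ideal.span_le]
      exact fun x hx => hx.1
  have hFle : Ideal.span {PF k a} ≤ P := by rw [Ideal.span_le]; simpa using hFP
  let p := P.map (PM k a)
  have hpp : p.IsPrime := Ideal.isPrime_map_quotientMk_of_isPrime hFle
  have hcomap : p.comap (PM k a) = P := Ideal.comap_map_mk hFle
  have hXp : PM k a (X i) ∈ p := Ideal.mem_map_of_mem _ hXP
  refine ⟨p, ⟨?_, ?_⟩, hXp⟩
  · rw [heightOne_iff]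
    apply le_antisymm
    · refine Ideal.height_le_one_of_isPrincipal_of_mem_minimalPrimes (Ideal.span {PM k a (X i)}) p ?_
      refine ⟨⟨hpp, by rw [Ideal.span_le]; simpa using hXp⟩, ?_⟩
      rintro q ⟨hq, hqX⟩ hqp
      have h1 : P ≤ q.comap (PM k a) := by
        refine hP.2 ⟨hq.comap _, ?_⟩ ?_
        · rw [Ideal.span_le]
          rintro f (rfl | rfl)
          · exact hqX (Ideal.subset_span rfl)
          · change PM k a (PF k a) ∈ q
            rw [PM_PF]; exact q.zero_mem
        · rw [← hcomap]; exact Ideal.comap_mono hqp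
      exact Ideal.map_le_iff_le_comap.mpr h1
    · obtain ⟨l, hl⟩ : ∃ l, l ∉ ({i} : Finset (Fin n)) := by
        have : Nontrivial (Fin n) := Fin.nontrivial_iff_two_le.mpr (by omega)
        obtain ⟨l, hl⟩ := exists_ne i
        exact ⟨l, by simpa using hl⟩
      have := card_le_height a ha hl p (by simpa using hXp)
      simpa using this
  · apply le_antisymm
    · change P.map (PM k a) ≤ _
      conv_lhs => rw [hspan]
      rw [Ideal.map_span, Ideal.span_le]
      rintro _ ⟨f, ⟨hf, m, hm⟩, rfl⟩
      exact Ideal.subset_span ⟨Ideal.mem_map_of_mem _ hf, m, PM_mem_piece a hm⟩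
    · rw [Ideal.span_le]
      exact fun x hx => hx.1

end Geometry

section Index

open MvPolynomial

variable {k : Type*} [Field k] {n : ℕ} (a : Fin n → ℕ)

lemma weight_eq (w : Fin n → ℕ) (e : Fin n →₀ ℕ) : Finsupp.weight w e = ∑ i, e i * w i := by
  rw [Finsupp.weight_apply, Finsupp.sum_fintype _ _ (by simp)]
  simp

lemma Mbar_le (ha : ∀ i, 1 ≤ a i) (p : Ideal (PBring k a)) (i : Fin n)
    (hi : PM k a (X i) ∈ p) :
    Mbar (PBpiece k a) p ≤ AddSubgroup.zmultiples ((Ltot a / Lpart a i : ℕ) : ℤ) := by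
  refine (AddSubgroup.closure_le _).mpr ?_
  intro m hm
  obtain ⟨y, hy, hyp⟩ := Set.not_subset.mp hm
  rw [SetLike.mem_coe, mem_piece] at hy
  rcases hy with ⟨-, rfl⟩ | ⟨h0, f, hf, rfl⟩
  · exact absurd p.zero_mem hyp
  have : ∃ e ∈ f.support, e i = 0 := by
    by_contra hc
    push Not at hc
    apply hyp
    rw [SetLike.mem_coe, f.as_sum, map_sum]
    refine Ideal.sum_mem _ fun e he => ?_
    have h1 : (X i : MvPolynomial (Fin n) k) ∣ monomial e (coeff e f) := by
      rw [X_dvd_monomial]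
      exact Or.inr (hc e he)
    obtain ⟨c, hc'⟩ := h1
    rw [hc', map_mul]
    exact Ideal.mul_mem_right _ _ hi
  obtain ⟨e, he, hei⟩ := this
  have h1 := hf (mem_support_iff.mp he)
  rw [weight_eq] at h1
  rw [SetLike.mem_coe, Int.mem_zmultiples_iff, ← Int.toNat_of_nonneg h0, Int.natCast_dvd_natCast, ← h1]
  refine Finset.dvd_sum fun j _ => ?_
  by_cases hj : j = i
  · simp [hj, hei]
  · exact (q_dvd_d a ha hj).mul_left _

lemma d_mem_Mbar (p : Ideal (PBring k a)) (j : Fin n) (hj : PM k a (X j) ∉ p) :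
    ((Ltot a / a j : ℕ) : ℤ) ∈ Mbar (PBpiece k a) p :=
  AddSubgroup.subset_closure fun h => hj (h (X_mem_piece a j))

lemma exists_ne' (hn : 3 ≤ n) (i : Fin n) : ∃ l, l ≠ i := by
  have : Nontrivial (Fin n) := Fin.nontrivial_iff_two_le.mpr (by omega)
  exact exists_ne i

lemma eB_eq (hn : 3 ≤ n) (ha : ∀ i, 1 ≤ a i) : eB (PBpiece k a) = 1 := by
  have h1 : (1 : ℤ) ∈ Gsub (PBpiece k a) := by
    have := subgroup_mem_of_d a ha Finset.univ ⟨⟨0, by omega⟩, Finset.mem_univ _⟩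
      (Gsub (PBpiece k a)) (by
        intro j _
        refine AddSubgroup.subset_closure fun h => ?_
        have h2 := X_mem_piece (k := k) a j
        rw [h, AddSubgroup.mem_bot] at h2
        obtain ⟨l, hl⟩ := exists_ne' hn j
        obtain ⟨p, hp, hlp⟩ := exists_prime (k := k) a hn ha l
        refine not_two a hn ha p hp.1 hl hlp ?_
        rw [h2]; exact p.zero_mem)
    rw [show Finset.univ.lcm a = Ltot a from rfl, Nat.div_self (Ltot_pos a ha)] at this
    simpa using this
  have h2 : Gsub (PBpiece k a) = AddSubgroup.zmultiples ((1 : ℕ) : ℤ) := by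
    refine le_antisymm (fun x _ => by simp) ?_
    rw [AddSubgroup.zmultiples_le]
    exact_mod_cast h1
  rw [eB, h2, groupGen_zmultiples]

lemma ebarB_eq (hn : 3 ≤ n) (ha : ∀ i, 1 ≤ a i) :
    ebarB (PBpiece k a) = ∏ i : Fin n, Ltot a / Lpart a i := by
  have hne : (homogHt1 (PBpiece k a)).Nonempty := by
    obtain ⟨p, hp, -⟩ := exists_prime (k := k) a hn ha ⟨0, by omega⟩
    exact ⟨p, hp⟩
  rw [ebarB, if_pos hne]
  rw [← groupGen_zmultiples (∏ i : Fin n, Ltot a / Lpart a i)]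
  congr 1
  apply le_antisymm
  · intro x hx
    rw [AddSubgroup.mem_iInf] at hx
    rw [Int.mem_zmultiples_iff, Nat.cast_prod]
    refine Finset.prod_dvd_of_coprime ?_ ?_
    · intro i _ j _ hij
      exact Nat.isCoprime_iff_coprime.mpr (coprime_q a ha hij)
    · intro i _
      obtain ⟨p, hp, hip⟩ := exists_prime (k := k) a hn ha i
      exact Int.mem_zmultiples_iff.mp (Mbar_le a ha p i hip (hx ⟨p, hp⟩))
  · rw [AddSubgroup.zmultiples_le, AddSubgroup.mem_iInf]
    rintro ⟨p, hp⟩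
    have key : ∃ i, ∀ j, j ≠ i → PM k a (X j) ∉ p := by
      by_cases h : ∃ i, PM k a (X i) ∈ p
      · obtain ⟨i, hi⟩ := h
        exact ⟨i, fun j hj => not_two a hn ha p hp.1 hj.symm hi⟩
      · push Not at h
        exact ⟨⟨0, by omega⟩, fun j _ => h j⟩
    obtain ⟨i, hi⟩ := key
    have h1 := subgroup_mem_of_d a ha (Finset.univ.erase i)
      (by obtain ⟨l, hl⟩ := exists_ne' hn i; exact ⟨l, by simp [hl]⟩)
      (Mbar (PBpiece k a) p)
      (fun j hj => d_mem_Mbar a p j (hi j (Finset.ne_of_mem_erase hj)))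
    rw [← Finset.prod_erase_mul _ _ (Finset.mem_univ i), Nat.cast_mul, ← smul_eq_mul]
    exact AddSubgroup.zsmul_mem _ h1 _

end Index

section Veronese

open MvPolynomial

variable {k : Type*} [Field k] {n : ℕ}

/-- The substitution `X_i ↦ X_i ^ g_i`. -/
def th (k : Type*) [Field k] {n : ℕ} (g : Fin n → ℕ) :
    MvPolynomial (Fin n) k →ₐ[k] MvPolynomial (Fin n) k :=
  aeval (fun i => X i ^ g i)

/-- Divide an exponent vector by `g`. -/
def dv {n : ℕ} (g : Fin n → ℕ) (e : Fin n →₀ ℕ) : Fin n →₀ ℕ :=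
  Finsupp.equivFunOnFinite.symm (fun i => e i / g i)

open Classical in
/-- The retraction of `th`. -/
def rh (k : Type*) [Field k] {n : ℕ} (g : Fin n → ℕ) :
    MvPolynomial (Fin n) k →ₗ[k] MvPolynomial (Fin n) k :=
  (basisMonomials (Fin n) k).constr k
    (fun e => if ∀ i, g i ∣ e i then monomial (dv g e) 1 else 0)

open Classical in
lemma rh_monomial (g : Fin n → ℕ) (e : Fin n →₀ ℕ) (c : k) :
    rh k g (monomial e c) = if ∀ i, g i ∣ e i then monomial (dv g e) c else 0 := by
  have h := (basisMonomials (Fin n) k).constr_basis k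
    (fun e => if ∀ i, g i ∣ e i then monomial (dv g e) (1 : k) else 0) e
  rw [coe_basisMonomials] at h
  rw [show monomial e c = c • monomial e (1 : k) by rw [smul_monomial]; simp, map_smul]
  rw [rh, h]
  split_ifs
  · rw [smul_monomial]; simp
  · simp

lemma rh_X_mul (g : Fin n → ℕ) (hg : ∀ i, 0 < g i) (i : Fin n) (G : MvPolynomial (Fin n) k) :
    rh k g (X i ^ g i * G) = X i * rh k g G := by
  classical
  rw [G.as_sum, Finset.mul_sum, map_sum, map_sum, Finset.mul_sum]
  refine Finset.sum_congr rfl fun e _ => ?_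
  rw [X_pow_eq_monomial, monomial_mul, one_mul, rh_monomial, rh_monomial]
  have hiff : (∀ j, g j ∣ (Finsupp.single i (g i) + e) j) ↔ ∀ j, g j ∣ e j := by
    refine forall_congr' fun j => ?_
    by_cases hj : i = j
    · subst hj; simp
    · simp [Finsupp.single_eq_of_ne' hj]
  simp only [hiff]
  split_ifs with h
  · rw [X, monomial_mul, one_mul]
    congr 2
    ext j
    by_cases hj : i = j
    · subst hj
      simp [dv, Nat.add_div_left _ (hg i), add_comm]
    · simp [dv, Finsupp.single_eq_of_ne' hj]
  · simp

lemma rh_th_mul (g : Fin n → ℕ) (hg : ∀ i, 0 < g i) (P G : MvPolynomial (Fin n) k) :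
    rh k g (th k g P * G) = P * rh k g G := by
  induction P using MvPolynomial.induction_on generalizing G with
  | C c =>
    rw [th, algHom_C, algebraMap_eq, C_mul', C_mul', map_smul]
  | add p q hp hq => rw [map_add, add_mul, map_add, hp, hq, add_mul]
  | mul_X p i hp =>
    rw [map_mul (th k g), mul_assoc, hp, mul_assoc, show th k g (X i) = X i ^ g i by simp [th],
      rh_X_mul g hg]

lemma rh_th (g : Fin n → ℕ) (hg : ∀ i, 0 < g i) (P : MvPolynomial (Fin n) k) :
    rh k g (th k g P) = P := by
  classical
  have h := rh_th_mul g hg P 1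
  have h1 : rh k g (1 : MvPolynomial (Fin n) k) = 1 := by
    rw [show (1 : MvPolynomial (Fin n) k) = monomial 0 1 from rfl, rh_monomial]
    rw [if_pos (by simp)]
    have h0 : dv g 0 = 0 := by
      ext j
      simp [dv]
    rw [h0]
  rwa [mul_one, h1, mul_one] at h

lemma th_monomial_dv (g : Fin n → ℕ) (e : Fin n →₀ ℕ) (h : ∀ i, g i ∣ e i) (c : k) :
    th k g (monomial (dv g e) c) = monomial e c := by
  rw [th, aeval_monomial, algebraMap_eq, monomial_eq (s := e)]
  congr 1
  rw [Finsupp.prod_fintype _ _ (by simp), Finsupp.prod_fintype _ _ (by simp)]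
  refine Finset.prod_congr rfl fun i _ => ?_
  rw [← pow_mul]
  congr 1
  exact Nat.mul_div_cancel' (h i)

lemma rh_homog (g w w' : Fin n → ℕ) (c : ℕ) (hc : 0 < c) (hw : ∀ i, c * w' i = g i * w i)
    (Q : MvPolynomial (Fin n) k) (m : ℕ) (hQ : IsWeightedHomogeneous w Q m) :
    IsWeightedHomogeneous w' (rh k g Q) (m / c) := by
  classical
  rw [Q.as_sum, map_sum]
  refine IsWeightedHomogeneous.sum _ _ _ fun e he => ?_
  rw [rh_monomial]
  split_ifs with h
  · refine isWeightedHomogeneous_monomial _ _ _ ?_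
    have h1 := hQ (mem_support_iff.mp he)
    rw [weight_eq] at h1 ⊢
    symm
    apply Nat.div_eq_of_eq_mul_right hc
    rw [← h1, Finset.mul_sum]
    refine Finset.sum_congr rfl fun i _ => ?_
    change _ = c * ((e i / g i) * w' i)
    rw [mul_left_comm, hw, ← mul_assoc, Nat.div_mul_cancel (h i)]
  · exact isWeightedHomogeneous_zero _ _ _

/-- All of part (d), for exponents `a = g * b`. -/
lemma veronese (a b g : Fin n → ℕ) (d : ℕ) (ha : ∀ i, 1 ≤ a i)
    (hab : ∀ i, a i = g i * b i)
    (h1 : ∀ e : Fin n →₀ ℕ, d ∣ ∑ i, e i * (Ltot a / a i) → ∀ i, g i ∣ e i)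
    (h2 : ∀ i, d ∣ g i * (Ltot a / a i)) :
    ∃ φ : (PBver k a d) ≃+* PBring k b,
      ∀ x : (PBver k a d), (∃ m : ℤ, (x : PBring k a) ∈ PBpiece k a m) →
        ∃ m' : ℤ, φ x ∈ PBpiece k b m' := by
  have hg : ∀ i, 0 < g i := fun i => Nat.pos_of_ne_zero fun h => by
    have := ha i; rw [hab i, h] at this; omega
  have hb : ∀ i, 1 ≤ b i := fun i => Nat.pos_of_ne_zero fun h => by
    have := ha i; rw [hab i, h] at this; omega
  have hF : th k g (PF k b) = PF k a := by
    simp [th, PF, ← pow_mul, hab]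
  have hlift : ∀ P ∈ Ideal.span {PF k b}, ((PM k a).comp (th k g).toRingHom) P = 0 := by
    intro P hP
    obtain ⟨c, rfl⟩ := Ideal.mem_span_singleton'.mp hP
    change PM k a (th k g (c * PF k b)) = 0
    rw [map_mul, hF, map_mul, PM_PF, mul_zero]
  let ψ : PBring k b →+* PBring k a := Ideal.Quotient.lift _ _ hlift
  have hψ : ∀ P, ψ (PM k b P) = PM k a (th k g P) := fun P => rfl
  -- key: congruence descends along the retraction
  have key : ∀ P Q : MvPolynomial (Fin n) k, PM k a (th k g P) = PM k a Q →
      PM k b P = PM k b (rh k g Q) := by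
    intro P Q h
    rw [Ideal.Quotient.eq, Ideal.mem_span_singleton'] at h ⊢
    obtain ⟨c, hc⟩ := h
    refine ⟨rh k g c, ?_⟩
    have h3 := congrArg (rh k g) hc
    rw [mul_comm c, ← hF, rh_th_mul g hg, map_sub, rh_th g hg] at h3
    rw [mul_comm, h3]
  have hinj : Function.Injective ψ := by
    rw [injective_iff_map_eq_zero]
    intro y hy
    obtain ⟨P, rfl⟩ := PM_surj b y
    have := key P 0 (by rw [← hψ, hy, map_zero])
    rw [this, map_zero, map_zero]
  have hrange : ψ.range = PBver k a d := by
    apply le_antisymm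
    · rintro _ ⟨y, rfl⟩
      obtain ⟨P, rfl⟩ := PM_surj b y
      rw [hψ]
      have hmem : ∀ (f : MvPolynomial (Fin n) k) (m : ℕ), d ∣ m →
          IsWeightedHomogeneous (fun i => Ltot a / a i) f m → PM k a f ∈ PBver k a d := by
        intro f m hm hf
        refine Subring.subset_closure (Set.mem_biUnion (x := (m : ℤ)) ?_ (PM_mem_piece a hf))
        exact Int.natCast_dvd_natCast.mpr hm
      induction P using MvPolynomial.induction_on with
      | C c =>
        rw [th, algHom_C, algebraMap_eq]
        exact hmem _ 0 (dvd_zero _) (isWeightedHomogeneous_C _ _)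
      | add p q hp hq => rw [map_add, map_add]; exact Subring.add_mem _ hp hq
      | mul_X p i hp =>
        rw [map_mul, map_mul]
        refine Subring.mul_mem _ hp ?_
        rw [show th k g (X i) = X i ^ g i by simp [th]]
        refine hmem _ _ (h2 i) ?_
        simpa using (isWeightedHomogeneous_X k (fun i => Ltot a / a i) i).pow (g i)
    · refine Subring.closure_le.mpr ?_
      intro y hy
      obtain ⟨m, hm, hy⟩ := Set.mem_iUnion₂.mp hy
      rw [SetLike.mem_coe, mem_piece] at hy
      rcases hy with ⟨-, rfl⟩ | ⟨h0, f, hf, rfl⟩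
      · exact ψ.range.zero_mem
      rw [SetLike.mem_coe, f.as_sum, map_sum]
      refine Subring.sum_mem _ fun e he => ?_
      have h3 := hf (mem_support_iff.mp he)
      rw [weight_eq] at h3
      have h4 : d ∣ ∑ i, e i * (Ltot a / a i) := by
        rw [h3, ← Int.natCast_dvd_natCast, Int.toNat_of_nonneg h0]
        exact hm
      refine ⟨PM k b (monomial (dv g e) (coeff e f)), ?_⟩
      rw [hψ, th_monomial_dv g e (h1 e h4)]
  let E : PBring k b ≃+* PBver k a d :=
    (RingEquiv.ofBijective ψ.rangeRestrict
      ⟨fun x y h => hinj (congrArg Subtype.val h), ψ.rangeRestrict_surjective⟩).trans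
      (RingEquiv.subringCongr hrange)
  have hE : ∀ y, ((E y : PBver k a d) : PBring k a) = ψ y := fun y => rfl
  refine ⟨E.symm, ?_⟩
  rintro x ⟨m, hm⟩
  obtain ⟨y, rfl⟩ := E.surjective x
  rw [E.symm_apply_apply]
  rw [hE, mem_piece] at hm
  rcases hm with ⟨-, h0⟩ | ⟨h0, Q, hQ, hQy⟩
  · refine ⟨0, ?_⟩
    rw [hinj (h0.trans (map_zero ψ).symm)]
    exact AddSubgroup.zero_mem _
  · obtain ⟨P, rfl⟩ := PM_surj b y
    rw [hψ] at hQy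
    rw [key P Q hQy.symm]
    have hLL : Ltot b ∣ Ltot a := Finset.lcm_dvd fun i _ =>
      (Dvd.intro_left _ (hab i).symm).trans (dvd_Ltot a i)
    have hc : 0 < Ltot a / Ltot b :=
      Nat.div_pos (Nat.le_of_dvd (Ltot_pos a ha) hLL) (Ltot_pos b hb)
    refine ⟨_, PM_mem_piece b (rh_homog g _ _ _ hc ?_ Q _ hQ)⟩
    intro i
    have hai : 0 < a i := ha i
    rw [Nat.div_mul_div_comm hLL (dvd_Ltot b i), mul_comm (Ltot a),
      Nat.mul_div_mul_left _ _ (Ltot_pos b hb)]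
    apply Nat.div_eq_of_eq_mul_right (hb i)
    rw [← mul_assoc, mul_comm (b i), ← hab, Nat.mul_div_cancel' (dvd_Ltot a i)]

end Veronese

end PBaux

/-- Let k be a field of characteristic 0, n ≥ 3 and a₁,…,aₙ ≥ 1, and let
B = B_{k;a₁,…,aₙ} be the Pham–Brieskorn ring with its ℕ-grading.  Then:
(a) the integers L/L₁, …, L/Lₙ are pairwise relatively prime;
(b) e(B) = 1 and ē(B) = ∏ᵢ (L/Lᵢ);
(c) B is saturated in codimension 1 (ē(B) = e(B)) iff Lᵢ = L for every i;
(d) for every positive divisor d of ∏ᵢ (L/Lᵢ) there is a ring isomorphism from B^{(d)}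
    onto B_{k;a₁′,…,aₙ′} mapping homogeneous elements to homogeneous elements, where
    aᵢ′ = gcd(aᵢ, Lᵢ)·((L/Lᵢ)/gcd(d, L/Lᵢ)). -/
theorem PhamBrieskorn_saturation_and_veronese
    {k : Type*} [Field k] [CharZero k]
    (n : ℕ) (hn : 3 ≤ n) (a : Fin n → ℕ) (ha : ∀ i, 1 ≤ a i) :
    (∀ i j : Fin n, i ≠ j →
      Nat.Coprime (Ltot a / Lpart a i) (Ltot a / Lpart a j)) ∧
    (eB (PBpiece k a) = 1 ∧ ebarB (PBpiece k a) = ∏ i : Fin n, Ltot a / Lpart a i) ∧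
    (ebarB (PBpiece k a) = eB (PBpiece k a) ↔ ∀ i : Fin n, Lpart a i = Ltot a) ∧
    (∀ d : ℕ, 0 < d → d ∣ ∏ i : Fin n, Ltot a / Lpart a i →
      ∃ φ : (PBver k a d) ≃+* PBring k (PBexp a d),
        ∀ x : (PBver k a d), (∃ m : ℤ, (x : PBring k a) ∈ PBpiece k a m) →
          ∃ m' : ℤ, φ x ∈ PBpiece k (PBexp a d) m') := by
  refine ⟨fun i j hij => PBaux.coprime_q a ha hij,
    ⟨PBaux.eB_eq a hn ha, PBaux.ebarB_eq a hn ha⟩, ?_, ?_⟩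
  · rw [PBaux.eB_eq a hn ha, PBaux.ebarB_eq a hn ha, Finset.prod_eq_one_iff]
    refine ⟨fun h i => ?_, fun h i _ => ?_⟩
    · have h1 := Nat.div_mul_cancel (PBaux.Lpart_dvd a i)
      rw [h i (Finset.mem_univ _), one_mul] at h1
      exact h1
    · rw [h i, Nat.div_self (PBaux.Ltot_pos a ha)]
  · intro d hd hdvd
    refine PBaux.veronese a (PBexp a d) (fun i => Nat.gcd d (Ltot a / Lpart a i)) d ha ?_ ?_ ?_
    · intro i
      conv_lhs => rw [PBaux.a_eq a ha i]
      rw [PBexp, mul_left_comm, Nat.mul_div_cancel' (Nat.gcd_dvd_right _ _)]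
    · intro e he i
      have h1 : Nat.gcd d (Ltot a / Lpart a i) ∣ ∑ j, e j * (Ltot a / a j) :=
        (Nat.gcd_dvd_left _ _).trans he
      rw [← Finset.add_sum_erase _ _ (Finset.mem_univ i)] at h1
      have h2 : Nat.gcd d (Ltot a / Lpart a i) ∣ e i * (Ltot a / a i) := by
        refine (Nat.dvd_add_left (Finset.dvd_sum fun j hj => ?_)).mp h1
        exact ((Nat.gcd_dvd_right _ _).trans
          (PBaux.q_dvd_d a ha (Finset.ne_of_mem_erase hj))).mul_left _
      exact (Nat.Coprime.coprime_dvd_left (Nat.gcd_dvd_right _ _)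
        (PBaux.coprime_q_d a ha i)).dvd_of_dvd_mul_right h2
    · intro i
      rw [← Nat.gcd_mul_right]
      refine Nat.dvd_gcd (dvd_mul_right _ _) (hdvd.trans ?_)
      rw [← Finset.mul_prod_erase _ _ (Finset.mem_univ i)]
      refine mul_dvd_mul_left _ ?_
      refine Finset.prod_dvd_of_isRelPrime ?_ ?_
      · intro j _ l _ hjl
        exact Nat.coprime_iff_isRelPrime.mp (PBaux.coprime_q a ha hjl)
      · intro j hj
        exact PBaux.q_dvd_d a ha (Finset.ne_of_mem_erase hj).symm
end
end

section
/- Let n ≥ 3 and (a_1, …, a_n) ∈ Γ_n. Let D be the set of positive divisors of ∏_{i=1}^n (L/L_i), and for d ∈ D let f(d) = (a_1', …, a_n') where a_i' = gcd(a_i, L_i) · ((L/L_i)/gcd(d, L/L_i)). Assume that for every d ∈ D with f(d) ∈ Γ_n, the ring B_{ℂ;f(d)} is rigid. For ν ∈ {1,2}, let I_ν = { i ∈ {1,…,n} : gcd(a_i, L_i) = ν }. Then at most one element i_0 ∈ I_2 satisfies a_{i_0} = 2, and: if no such i_0 exists, M(B_{ℂ;a_1,…,a_n}) = { a_i : i ∈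 I_1 } ∪ { a_i·a_j/4 : i, j ∈ I_2, i ≠ j }; if i_0 exists, M(B_{ℂ;a_1,…,a_n}) = { a_i : i ∈ I_1 } ∪ { a_i/2 : i ∈ I_2 \ {i_0} }. -/
noncomputable section

set_option synthInstance.maxHeartbeats 1000000
set_option maxHeartbeats 1000000

section NR

variable {B : Type*} [CommRing B]

/-- The d-th Veronese subring B^{(d)} of a ℤ-graded ring. -/
noncomputable def verZ (𝒜 : ℤ → AddSubgroup B) (d : ℕ) : Subring B :=
  verSub 𝒜 (AddSubgroup.zmultiples (d : ℤ))

/-- NR(B): the set of d ≥ 1 such that B^{(d)} is non-rigid. -/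
noncomputable def NRset (𝒜 : ℤ → AddSubgroup B) : Set ℕ :=
  { d | 1 ≤ d ∧ ∃ D : Derivation ℤ (verZ 𝒜 d) (verZ 𝒜 d), IsLND D ∧ D ≠ 0 }

/-- M(B): the maximal elements of NR(B) for the order d₁ ≼ d₂ ⟺ d₂ ∣ d₁. -/
noncomputable def MsetZ (𝒜 : ℤ → AddSubgroup B) : Set ℕ :=
  { d | d ∈ NRset 𝒜 ∧ ∀ e ∈ NRset 𝒜, e ∣ d → e = d }

end NR

/-- (a₁,…,aₙ) ∈ Γₙ: all aᵢ > 1 and at most one index i has aᵢ = 2. -/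
def GammaCond {n : ℕ} (a : Fin n → ℕ) : Prop :=
  (∀ i, 2 ≤ a i) ∧ ∀ i j : Fin n, a i = 2 → a j = 2 → i = j

section LNDgeneral

theorem der_iter_add {R : Type*} [CommRing R] (D : Derivation ℤ R R) (n : ℕ) (a b : R) :
    (⇑D)^[n] (a + b) = (⇑D)^[n] a + (⇑D)^[n] b := by
  induction n generalizing a b with
  | zero => rfl
  | succ n ih => simp only [Function.iterate_succ_apply, map_add, ih]

theorem der_iter_zero {R : Type*} [CommRing R] (D : Derivation ℤ R R) (n : ℕ) :
    (⇑D)^[n] 0 = 0 := by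
  induction n with
  | zero => rfl
  | succ n ih => simp only [Function.iterate_succ_apply, map_zero, ih]

theorem der_iter_zero_of_le {R : Type*} [CommRing R] (D : Derivation ℤ R R) {m n : ℕ}
    (hmn : m ≤ n) {a : R} (h : (⇑D)^[m] a = 0) : (⇑D)^[n] a = 0 := by
  obtain ⟨k, rfl⟩ := Nat.exists_eq_add_of_le' hmn
  rw [Function.iterate_add_apply, h, der_iter_zero]

theorem der_iter_leibniz {R : Type*} [CommRing R] (D : Derivation ℤ R R) (n : ℕ) (a b : R) :
    (⇑D)^[n] (a * b) = ∑ ij ∈ Finset.HasAntidiagonal.antidiagonal n,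
      ((n.choose ij.1 : ℕ) : R) * ((⇑D)^[ij.1] a * (⇑D)^[ij.2] b) := by
  induction n with
  | zero => simp
  | succ n ih =>
    rw [Function.iterate_succ_apply', ih,
      Finset.sum_antidiagonal_choose_succ_mul (fun i j => (⇑D)^[i] a * (⇑D)^[j] b), map_sum,
      ← Finset.sum_add_distrib]
    refine Finset.sum_congr rfl fun ij hij => ?_
    have h1 : n.choose ij.2 = n.choose ij.1 := by
      rw [← Finset.HasAntidiagonal.mem_antidiagonal.1 hij]
      exact (Nat.choose_symm_add).symm
    rw [h1, Derivation.leibniz, Derivation.leibniz, Derivation.map_natCast]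
    simp only [Function.iterate_succ_apply', smul_eq_mul]
    ring

/-- `D^n a ≠ 0` and `D^(n+1) a = 0`. -/
def HasDeg {R : Type*} [CommRing R] (D : Derivation ℤ R R) (a : R) (n : ℕ) : Prop :=
  (⇑D)^[n] a ≠ 0 ∧ (⇑D)^[n + 1] a = 0

theorem HasDeg.exists {R : Type*} [CommRing R] {D : Derivation ℤ R R} (hD : IsLND D) {a : R}
    (ha : a ≠ 0) : ∃ n, HasDeg D a n := by
  classical
  have h : ∃ n, (⇑D)^[n] a = 0 := let ⟨n, _, h⟩ := hD a; ⟨n, h⟩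
  have h0 : Nat.find h ≠ 0 := fun h0 => ha (by simpa [h0] using Nat.find_spec h)
  obtain ⟨k, hk⟩ := Nat.exists_eq_succ_of_ne_zero h0
  refine ⟨k, Nat.find_min h (by omega), ?_⟩
  have := Nat.find_spec h
  rwa [hk] at this

theorem HasDeg.unique {R : Type*} [CommRing R] {D : Derivation ℤ R R} {a : R} {m n : ℕ}
    (hm : HasDeg D a m) (hn : HasDeg D a n) : m = n := by
  by_contra hne
  rcases lt_or_gt_of_ne hne with h | h
  · exact hn.1 (der_iter_zero_of_le D h hm.2)
  · exact hm.1 (der_iter_zero_of_le D h hn.2)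

theorem HasDeg.mul {R : Type*} [CommRing R] [IsDomain R] [CharZero R] {D : Derivation ℤ R R}
    {a b : R} {m n : ℕ} (hm : HasDeg D a m) (hn : HasDeg D b n) : HasDeg D (a * b) (m + n) := by
  constructor
  · rw [der_iter_leibniz, Finset.sum_eq_single (m, n)]
    · refine mul_ne_zero ?_ (mul_ne_zero hm.1 hn.1)
      exact_mod_cast (Nat.choose_pos (Nat.le_add_right m n)).ne'
    · rintro ⟨i, j⟩ hij hne
      rw [Finset.HasAntidiagonal.mem_antidiagonal] at hij
      simp only at hij
      rcases lt_trichotomy i m with h | h | h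
      · rw [der_iter_zero_of_le D (by omega : n + 1 ≤ j) hn.2]; simp
      · exact absurd (Prod.ext h (by simp only; omega)) hne
      · rw [der_iter_zero_of_le D (by omega : m + 1 ≤ i) hm.2]; simp
    · intro h; simp at h
  · rw [der_iter_leibniz]
    refine Finset.sum_eq_zero ?_
    rintro ⟨i, j⟩ hij
    rw [Finset.HasAntidiagonal.mem_antidiagonal] at hij
    simp only at hij
    rcases le_or_gt i m with h | h
    · rw [der_iter_zero_of_le D (by omega : n + 1 ≤ j) hn.2]; simp
    · rw [der_iter_zero_of_le D (by omega : m + 1 ≤ i) hm.2]; simp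

theorem HasDeg.pow {R : Type*} [CommRing R] [IsDomain R] [CharZero R] {D : Derivation ℤ R R}
    {a : R} {m : ℕ} (hm : HasDeg D a m) (k : ℕ) : HasDeg D (a ^ k) (k * m) := by
  induction k with
  | zero => exact ⟨by simp, by simp⟩
  | succ k ih =>
    rw [pow_succ, Nat.succ_mul]
    exact ih.mul hm

theorem HasDeg.der {R : Type*} [CommRing R] {D : Derivation ℤ R R}
    {a : R} {m : ℕ} (hm : HasDeg D a (m + 1)) : HasDeg D (D a) m := by
  constructor
  · have := hm.1; rwa [Function.iterate_succ_apply] at this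
  · have := hm.2; rwa [Function.iterate_succ_apply] at this

/-- The elements killed by a power of the derivation form a subring. -/
def nilSub {R : Type*} [CommRing R] (D : Derivation ℤ R R) : Subring R where
  carrier := {x | ∃ n : ℕ, 0 < n ∧ (⇑D)^[n] x = 0}
  one_mem' := ⟨1, one_pos, by simp⟩
  zero_mem' := ⟨1, one_pos, by simp⟩
  neg_mem' := by
    rintro x ⟨n, hn, hx⟩
    refine ⟨n, hn, ?_⟩
    have := der_iter_add D n x (-x)
    rw [add_neg_cancel, der_iter_zero, hx, zero_add] at this
    exact this.symm
  add_mem' := by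
    rintro x y ⟨n, hn, hx⟩ ⟨m, hm, hy⟩
    refine ⟨n + m, by omega, ?_⟩
    rw [der_iter_add, der_iter_zero_of_le D (by omega) hx, der_iter_zero_of_le D (by omega) hy,
      add_zero]
  mul_mem' := by
    rintro x y ⟨n, hn, hx⟩ ⟨m, hm, hy⟩
    refine ⟨n + m, by omega, ?_⟩
    rw [der_iter_leibniz]
    refine Finset.sum_eq_zero ?_
    rintro ⟨i, j⟩ hij
    rw [Finset.HasAntidiagonal.mem_antidiagonal] at hij
    simp only at hij
    rcases lt_or_ge i n with h | h
    · rw [der_iter_zero_of_le D (by omega : m ≤ j) hy]; simp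
    · rw [der_iter_zero_of_le D h hx]; simp

theorem mem_nilSub {R : Type*} [CommRing R] {D : Derivation ℤ R R} {x : R} :
    x ∈ nilSub D ↔ ∃ n : ℕ, 0 < n ∧ (⇑D)^[n] x = 0 := Iff.rfl

theorem mem_nilSub_of_der {R : Type*} [CommRing R] {D : Derivation ℤ R R} {x : R}
    (h : D x ∈ nilSub D) : x ∈ nilSub D := by
  obtain ⟨n, hn, h⟩ := h
  exact ⟨n + 1, by omega, by rwa [Function.iterate_succ_apply]⟩

/-- A ring is non-rigid. -/
def NonRigid (R : Type*) [CommRing R] : Prop :=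
  ∃ D : Derivation ℤ R R, IsLND D ∧ D ≠ 0

/-- Make a derivation out of an additive map. -/
def mkDer {R : Type*} [CommRing R] (f : R →+ R) (h : ∀ a b, f (a * b) = a * f b + b * f a) :
    Derivation ℤ R R :=
  Derivation.mk' f.toIntLinearMap h

theorem mkDer_apply {R : Type*} [CommRing R] (f : R →+ R)
    (h : ∀ a b, f (a * b) = a * f b + b * f a) (x : R) : mkDer f h x = f x := rfl

theorem NonRigid.congr {R S : Type*} [CommRing R] [CommRing S] (e : R ≃+* S)
    (h : NonRigid R) : NonRigid S := by
  obtain ⟨D, hD, hne⟩ := h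
  let D' : Derivation ℤ S S := mkDer
    ((e : R →+* S).toAddMonoidHom.comp
      ((D : R →ₗ[ℤ] R).toAddMonoidHom.comp (e.symm : S →+* R).toAddMonoidHom)) (by
      intro a b
      change e (D (e.symm (a * b))) = a * e (D (e.symm b)) + b * e (D (e.symm a))
      simp [Derivation.leibniz])
  have hap : ∀ x, D' x = e (D (e.symm x)) := fun x => rfl
  have hit : ∀ n x, (⇑D')^[n] (e x) = e ((⇑D)^[n] x) := by
    intro n
    induction n with
    | zero => intro x; rfl
    | succ n ih =>
      intro x
      rw [Function.iterate_succ_apply, hap, e.symm_apply_apply, ih, Function.iterate_succ_apply]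
  refine ⟨D', ?_, ?_⟩
  · intro b
    obtain ⟨n, hn, h⟩ := hD (e.symm b)
    refine ⟨n, hn, ?_⟩
    have := hit n (e.symm b)
    rw [h, e.apply_symm_apply, map_zero] at this
    exact this
  · intro h0
    apply hne
    ext x
    have : D' (e x) = 0 := by rw [h0]; rfl
    rw [hap, e.symm_apply_apply] at this
    simpa using this

end LNDgeneral

section Lift

theorem exists_der_ext {A K : Type*} [CommRing A] [IsDomain A] [Field K] [CharZero K]
    [Algebra A K] [FaithfulSMul A K] [Algebra.IsAlgebraic A K] (D : Derivation ℤ A A) :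
    ∃ E : Derivation ℤ K K, ∀ a : A, E (algebraMap A K a) = algebraMap A K (D a) := by
  let _ : Algebra (FractionRing A) K := FractionRing.liftAlgebra A K
  have : IsScalarTower A (FractionRing A) K := FractionRing.isScalarTower_liftAlgebra A K
  have : Algebra.IsAlgebraic (FractionRing A) K :=
    (IsFractionRing.comap_isAlgebraic_iff (A := A) (K := FractionRing A) (C := K)).1 inferInstance
  have : CharZero (FractionRing A) := by
    refine ⟨fun m n h => ?_⟩
    have := congrArg (algebraMap (FractionRing A) K) h
    simpa using this
  have : Algebra.FormallyEtale (FractionRing A) K := Algebra.FormallyEtale.of_isSeparable _ _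
  have : Algebra.FormallyEtale A (FractionRing A) :=
    Algebra.FormallyEtale.of_isLocalization (nonZeroDivisors A)
  have : Algebra.FormallyEtale A K := Algebra.FormallyEtale.comp A (FractionRing A) K
  let D1 : Derivation ℤ A K := (Algebra.linearMap A K).compDer D
  let φ : Ω[K⁄ℤ] →ₗ[K] K :=
    (LinearMap.liftBaseChange K D1.liftKaehlerDifferential).comp
      (KaehlerDifferential.tensorKaehlerEquivOfFormallyEtale ℤ A K).symm.toLinearMap
  refine ⟨φ.compDer (KaehlerDifferential.D ℤ K), fun a => ?_⟩
  have : (KaehlerDifferential.tensorKaehlerEquivOfFormallyEtale ℤ A K).symm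
      (KaehlerDifferential.D ℤ K (algebraMap A K a)) = 1 ⊗ₜ KaehlerDifferential.D ℤ A a :=
    KaehlerDifferential.tensorKaehlerEquivOfFormallyEtale_symm_D_algebraMap ℤ A K a
  change (LinearMap.liftBaseChange K D1.liftKaehlerDifferential)
    ((KaehlerDifferential.tensorKaehlerEquivOfFormallyEtale ℤ A K).symm
      (KaehlerDifferential.D ℤ K (algebraMap A K a))) = _
  rw [this]
  simp [D1]

theorem lift_nonrigid {B : Type*} [CommRing B] [IsDomain B] [CharZero B]
    {K : Type*} [Field K] [Algebra B K] [IsFractionRing B K]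
    (A C : Subring B) (hAC : A ≤ C) (N : ℕ) (hN : 0 < N) (ν : B) (hν : ν * N = 1) (M : Set B)
    (hMC : (M : Set B) ⊆ C) (hM : (C : Set B) ⊆ AddSubgroup.closure M)
    (hMN : ∀ c ∈ M, c ^ N ∈ A)
    (hcA : ∀ α ∈ A, ∀ z : B, α ≠ 0 → α * z ∈ A → z ∈ A)
    (hcC : ∀ α ∈ A, ∀ z : B, α ≠ 0 → α * z ∈ C → z ∈ C)
    (hIntegral : Algebra.IsIntegral A B)
    (hext : ∀ c ∈ M, ∀ z : K,
      (∀ h : B, h ≠ 0 → h * c ∈ A → h ^ N ∈ A →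
        ∃ b : B, algebraMap B K h ^ (N + 1) * z = algebraMap B _ b) →
      ∃ b : B, z = algebraMap B _ b)
    (hA : NonRigid A) : NonRigid C := by
  obtain ⟨D, hD, hD0⟩ := hA
  have : CharZero K := by
    refine ⟨fun m n h => ?_⟩
    have h' : algebraMap B K m = algebraMap B K n := by simpa using h
    exact_mod_cast IsFractionRing.injective B K h'
  let ι : B →+* K := algebraMap B K
  have hι : Function.Injective ι := IsFractionRing.injective B K
  have : FaithfulSMul A K := by
    rw [faithfulSMul_iff_algebraMap_injective]
    exact hι.comp Subtype.coe_injective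
  have : Algebra.IsAlgebraic A B := inferInstance
  have : Algebra.IsAlgebraic B K := IsLocalization.isAlgebraic K (nonZeroDivisors B)
  have : NoZeroDivisors A := inferInstance
  have : Algebra.IsAlgebraic A K := Algebra.IsAlgebraic.trans A B K
  obtain ⟨E, hE⟩ := exists_der_ext (K := K) D
  have hEA : ∀ a : A, E (ι a) = ι (D a) := hE
  have hNK : (N : K) ≠ 0 := by exact_mod_cast hN.ne'
  have hEpow : ∀ x : K, E (x ^ N) = N * x ^ (N - 1) * E x := by
    intro x
    rw [Derivation.leibniz_pow]
    simp [mul_assoc]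
  have hpp : ∀ x : K, x ^ (N - 1) * x = x ^ N := fun x => by
    rw [← pow_succ, Nat.sub_add_cancel hN]
  have hEpow' : ∀ x : K, x * E (x ^ N) = N * x ^ N * E x := by
    intro x
    rw [hEpow, ← hpp x]; ring
  -- the module of elements of `Frac A * c`
  have hstep : ∀ c ∈ M, c ≠ 0 → ∀ z : K, (∃ α β : A, α ≠ 0 ∧ ι α * z = ι β * ι c) →
      (∃ α β : A, α ≠ 0 ∧ ι α * E z = ι β * ι c) := by
    rintro c hc hc0 z ⟨α, β, hα, h⟩
    have h1 := congrArg E h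
    rw [Derivation.leibniz, Derivation.leibniz, hEA, hEA] at h1
    simp only [smul_eq_mul] at h1
    let γ : A := ⟨c ^ N, hMN c hc⟩
    have hγ : ι (γ : B) = ι c ^ N := by simp [γ]
    have hγ0 : γ ≠ 0 := by
      intro h0
      exact pow_ne_zero N hc0 (congrArg Subtype.val h0)
    have h2 := hEpow' (ι c)
    rw [← hγ, hEA] at h2
    refine ⟨α * α * N * γ, α * N * γ * D β + α * β * D γ - N * γ * D α * β, ?_, ?_⟩
    · exact mul_ne_zero (mul_ne_zero (mul_ne_zero hα hα) (by exact_mod_cast hN.ne')) hγ0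
    · push_cast
      simp only [map_mul, map_add, map_sub, map_natCast]
      linear_combination (ι α * N * ι γ) * h1 - (ι α * ι β) * h2 - (N * ι γ * ι (D α)) * h
  -- `E` maps generators into `C`
  have hgen : ∀ c ∈ M, ∃ b ∈ C, E (ι c) = ι b := by
    intro c hc
    by_cases hc0 : c = 0
    · exact ⟨0, C.zero_mem, by simp [hc0]⟩
    have hB : ∃ b : B, E (ι c) = ι b := by
      apply hext c hc
      intro h h0 hhc hhN
      let u : A := ⟨h * c, hhc⟩
      let v : A := ⟨h ^ N, hhN⟩
      have hu : ι (u : B) = ι h * ι c := by simp [u]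
      have hv : ι (v : B) = ι h ^ N := by simp [v]
      have h1 := congrArg E hu
      rw [hEA, Derivation.leibniz] at h1
      simp only [smul_eq_mul] at h1
      have h2 := hEpow (ι h)
      rw [← hv, hEA] at h2
      -- N h^(N+1) E c = N h^N D u - c h D v
      refine ⟨h ^ N * (D u : A) - c * h * (ν * (D v : A)), ?_⟩
      change ι h ^ (N + 1) * E (ι c) = ι _
      have h3 := hpp (ι h)
      have h4 : ι ν * N = 1 := by rw [← map_natCast ι, ← map_mul, hν, map_one]
      simp only [map_mul, map_sub, map_pow, h2, h1]
      rw [pow_succ, ← h3]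
      linear_combination (ι c * ι h ^ (N - 1) * ι h * E (ι h)) * h4
    obtain ⟨b, hb⟩ := hB
    refine ⟨b, ?_, hb⟩
    obtain ⟨α, β, hα, h⟩ := hstep c hc hc0 (ι c) ⟨1, 1, one_ne_zero, by simp⟩
    rw [hb, ← map_mul, ← map_mul] at h
    refine hcC α α.2 b (by simpa using hα) ?_
    rw [hι h]
    exact C.mul_mem (hAC β.2) (hMC hc)
  have hEC : ∀ c : C, ∃ b : C, E (ι c) = ι b := by
    rintro ⟨c, hc⟩
    have hc' := hM hc
    have : ∃ b ∈ C, E (ι c) = ι b := by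
      clear hc
      induction hc' using AddSubgroup.closure_induction with
      | mem x hx => exact hgen x hx
      | zero => exact ⟨0, C.zero_mem, by simp⟩
      | add x y _ _ hx hy =>
        obtain ⟨b, hb, h⟩ := hx
        obtain ⟨b', hb', h'⟩ := hy
        exact ⟨b + b', C.add_mem hb hb', by simp [h, h']⟩
      | neg x _ hx =>
        obtain ⟨b, hb, h⟩ := hx
        exact ⟨-b, C.neg_mem hb, by simp [h]⟩
    obtain ⟨b, hb, h⟩ := this
    exact ⟨⟨b, hb⟩, h⟩
  choose f hf using hEC
  have hfinj : ∀ x y : C, ι x = ι y → x = y := fun x y h => Subtype.ext (hι h)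
  let F : Derivation ℤ C C := mkDer
    { toFun := f
      map_zero' := by
        apply hfinj
        rw [← hf]; simp
      map_add' := by
        intro x y
        apply hfinj
        rw [← hf]; simp [← hf] }
    (by
      intro x y
      apply hfinj
      change ι (f (x * y) : C) = ι ((x * f y + y * f x : C) : B)
      rw [← hf]
      push_cast
      simp [← hf])
  have hF : ∀ c : C, ι (F c) = E (ι c) := fun c => (hf c).symm
  have hFA : ∀ a : A, F ⟨a, hAC a.2⟩ = ⟨D a, hAC (D a).2⟩ := by
    intro a
    apply hfinj
    rw [hF]
    exact hEA a
  refine ⟨F, ?_, ?_⟩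
  · -- local nilpotency
    -- key descent
    have key : ∀ k : ℕ, ∀ z : C, z ≠ 0 → ∀ hz : ∀ m, (((⇑F)^[m] z : C) : B) ^ N ∈ A,
        HasDeg D ⟨(z : B) ^ N, hz 0⟩ k → z ∈ nilSub F := by
      intro k
      induction k using Nat.strong_induction_on with
      | _ k ih =>
        intro z hz0 hz hdeg
        by_cases hFz : F z = 0
        · exact ⟨1, one_pos, by simpa using hFz⟩
        apply mem_nilSub_of_der
        have hz' : ∀ m, (((⇑F)^[m] (F z) : C) : B) ^ N ∈ A := fun m => by
          have := hz (m + 1)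
          rwa [Function.iterate_succ_apply] at this
        let p : A := ⟨(z : B) ^ N, hz 0⟩
        let q : A := ⟨((F z : C) : B) ^ N, hz' 0⟩
        have hp : ι (p : B) = ι z ^ N := by simp [p]
        have hq : ι (q : B) = E (ι z) ^ N := by simp [q, hF]
        have hp0 : p ≠ 0 := by
          intro h
          have := congrArg Subtype.val h
          exact hz0 (Subtype.ext (pow_eq_zero_iff hN.ne' |>.1 this))
        have hq0 : q ≠ 0 := by
          intro h
          have := congrArg Subtype.val h
          exact hFz (Subtype.ext (pow_eq_zero_iff hN.ne' |>.1 this))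
        have hrel : (N : A) ^ N * p ^ (N - 1) * q = (D p) ^ N := by
          apply Subtype.ext
          apply hι
          push_cast
          simp only [map_mul, map_pow, map_natCast]
          rw [← hEA, hq, hp, hEpow]
          ring
        have hNA : HasDeg D ((N : A) ^ N) 0 := by
          refine ⟨?_, ?_⟩
          · simpa using hN.ne'
          · have : D ((N : A) ^ N) = 0 := by
              rw [← Nat.cast_pow]; exact Derivation.map_natCast D _
            simpa using this
        obtain ⟨l, hl⟩ := HasDeg.exists hD hq0
        have hL := (hNA.mul (hdeg.pow (N - 1))).mul hl
        have hDp : D p ≠ 0 := by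
          intro h0
          rw [h0, zero_pow hN.ne'] at hrel
          refine mul_ne_zero (mul_ne_zero (pow_ne_zero _ ?_) (pow_ne_zero _ hp0)) hq0 hrel
          exact_mod_cast hN.ne'
        obtain ⟨j, rfl⟩ : ∃ j, k = j + 1 := by
          rcases k with _ | j
          · exact absurd (by simpa using hdeg.2) hDp
          · exact ⟨j, rfl⟩
        have hR := hdeg.der.pow N
        have hL' : HasDeg D ((D p) ^ N) (0 + (N - 1) * (j + 1) + l) := by
          rw [← hrel]; exact hL
        have heq := hL'.unique hR
        refine ih l ?_ (F z) hFz hz' hl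
        obtain ⟨N', rfl⟩ : ∃ N', N = N' + 1 := ⟨N - 1, by omega⟩
        simp only [Nat.add_sub_cancel] at heq
        nlinarith
    have hMnil : ∀ c (hc : c ∈ M), (⟨c, hMC hc⟩ : C) ∈ nilSub F := by
      intro c hc
      by_cases hc0 : c = 0
      · have : (⟨c, hMC hc⟩ : C) = 0 := Subtype.ext hc0
        rw [this]; exact zero_mem _
      have hV : ∀ m, ∃ α β : A, α ≠ 0 ∧ ι α * ι ((⇑F)^[m] ⟨c, hMC hc⟩ : C) = ι β * ι c := by
        intro m
        induction m with
        | zero => exact ⟨1, 1, one_ne_zero, by simp⟩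
        | succ m ih =>
          rw [Function.iterate_succ_apply', hF]
          exact hstep c hc hc0 _ ih
      have hz : ∀ m, (((⇑F)^[m] ⟨c, hMC hc⟩ : C) : B) ^ N ∈ A := by
        intro m
        obtain ⟨α, β, hα, h⟩ := hV m
        rw [← map_mul, ← map_mul] at h
        have h' := hι h
        refine hcA (α ^ N : A) (α ^ N : A).2 _ (by simpa using fun h => absurd h hα) ?_
        push_cast
        rw [← mul_pow, h', mul_pow]
        exact A.mul_mem (A.pow_mem β.2 N) (hMN c hc)
      have hz0 : (⟨c ^ N, hMN c hc⟩ : A) ≠ 0 := fun h =>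
        pow_ne_zero N hc0 (congrArg Subtype.val h)
      obtain ⟨k, hk⟩ := HasDeg.exists hD hz0
      exact key k _ (fun h => hc0 (congrArg Subtype.val h)) hz hk
    intro b
    change b ∈ nilSub F
    obtain ⟨c, hc⟩ := b
    have hcl : c ∈ AddSubgroup.closure M := hM hc
    have hle : AddSubgroup.closure M ≤ ((nilSub F).map C.subtype).toAddSubgroup := by
      rw [AddSubgroup.closure_le]
      intro x hx
      exact ⟨⟨x, hMC hx⟩, hMnil x hx, rfl⟩
    obtain ⟨y, hy, hyc⟩ := hle hcl
    have : y = ⟨c, hc⟩ := Subtype.ext hyc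
    rwa [← this]
  · intro h0
    apply hD0
    ext a
    have := hFA a
    rw [h0] at this
    have h2 := congrArg Subtype.val this
    simpa using h2.symm

end Lift

section PBdomain

open MvPolynomial

/-- The Pham–Brieskorn polynomial. -/
def PBpoly {n : ℕ} (a : Fin n → ℕ) : MvPolynomial (Fin n) ℂ := ∑ i : Fin n, X i ^ a i

theorem eval_single_PBpoly {n : ℕ} (a : Fin n → ℕ) (ha : ∀ i, 1 ≤ a i) (k : Fin n) :
    eval (Pi.single k 1 : Fin n → ℂ) (PBpoly a) = 1 := by
  classical
  simp only [PBpoly, map_sum, map_pow, eval_X]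
  rw [Finset.sum_eq_single k]
  · simp
  · intro j _ hj
    rw [Pi.single_eq_of_ne hj, zero_pow (by have := ha j; omega)]
  · simp

theorem X_not_dvd_of_eval {n : ℕ} (p : MvPolynomial (Fin n) ℂ) {i k : Fin n} (hik : i ≠ k)
    (h : eval (Pi.single k 1 : Fin n → ℂ) p ≠ 0) : ¬ X i ∣ p := by
  rintro ⟨q, rfl⟩
  apply h
  rw [map_mul, eval_X, Pi.single_eq_of_ne hik, zero_mul]

theorem PBpoly_sqfree {n : ℕ} (hn : 2 ≤ n) (a : Fin n → ℕ) (ha : ∀ i, 1 ≤ a i)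
    (π : MvPolynomial (Fin n) ℂ) (hπ : Prime π) : ¬ π ^ 2 ∣ PBpoly a := by
  classical
  rintro ⟨q, hq⟩
  let i : Fin n := ⟨0, by omega⟩
  let k : Fin n := ⟨1, by omega⟩
  have hik : i ≠ k := by simp [i, k]
  have hd : π ∣ pderiv i (PBpoly a) := by
    rw [hq, Derivation.leibniz, Derivation.leibniz_pow]
    simp only [smul_eq_mul, nsmul_eq_mul]
    refine dvd_add ⟨π * pderiv i q, by ring⟩ ⟨q * (2 * pderiv i π), by push_cast; ring⟩
  have hpd : pderiv i (PBpoly a) = C (a i : ℂ) * X i ^ (a i - 1) := by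
    rw [PBpoly, map_sum, Finset.sum_eq_single i]
    · rw [Derivation.leibniz_pow]; simp
    · intro j _ hj
      rw [Derivation.leibniz_pow, pderiv_X_of_ne hj]; simp
    · simp
  rw [hpd] at hd
  rcases hπ.dvd_or_dvd hd with h | h
  · have : IsUnit (C (a i : ℂ) : MvPolynomial (Fin n) ℂ) := by
      apply IsUnit.map
      have := ha i
      exact isUnit_iff_ne_zero.2 (by exact_mod_cast (by omega : a i ≠ 0))
    exact hπ.not_unit (isUnit_of_dvd_unit h this)
  · have h1 := hπ.dvd_of_dvd_pow h
    have h2 : Associated π (X i) := (hπ.dvd_prime_iff_associated (MvPolynomial.X_prime)).1 h1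
    have h3 : X i ∣ PBpoly a := by
      rw [hq]
      exact (h2.symm.dvd.trans (dvd_pow_self π two_ne_zero)).mul_right q
    exact X_not_dvd_of_eval _ hik (by rw [eval_single_PBpoly a ha k]; exact one_ne_zero) h3

theorem PBpoly_prime {n : ℕ} (hn : 3 ≤ n) (a : Fin n → ℕ) (ha : ∀ i, 1 ≤ a i) :
    Prime (PBpoly a) := by
  obtain ⟨m, rfl⟩ : ∃ m, n = m + 1 := ⟨n - 1, by omega⟩
  rw [← UniqueFactorizationMonoid.irreducible_iff_prime,
    ← MulEquiv.irreducible_iff (finSuccEquiv ℂ m)]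
  let b : Fin m → ℕ := fun j => a j.succ
  have hb : ∀ j, 1 ≤ b j := fun j => ha _
  have hF : finSuccEquiv ℂ m (PBpoly a) = Polynomial.X ^ a 0 + Polynomial.C (PBpoly b) := by
    simp only [PBpoly, map_sum, map_pow, Fin.sum_univ_succ, finSuccEquiv_X_zero,
      finSuccEquiv_X_succ, map_add, b]
  rw [hF]
  have hq0 : PBpoly b ≠ 0 := by
    intro h
    have := eval_single_PBpoly b hb ⟨0, by omega⟩
    rw [h] at this
    simp at this
  have hqu : ¬ IsUnit (PBpoly b) := by
    intro h
    have h1 := h.map (eval (0 : Fin m → ℂ))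
    have h2 : eval (0 : Fin m → ℂ) (PBpoly b) = 0 := by
      simp only [PBpoly, map_sum, map_pow, eval_X]
      refine Finset.sum_eq_zero fun j _ => ?_
      have := hb j
      exact zero_pow (by omega)
    rw [h2] at h1
    exact not_isUnit_zero h1
  obtain ⟨π, hπi, hπq⟩ := WfDvdMonoid.exists_irreducible_factor hqu hq0
  have hπ := UniqueFactorizationMonoid.irreducible_iff_prime.1 hπi
  have ha0 : a 0 ≠ 0 := by have := ha 0; omega
  have hmon : (Polynomial.X ^ a 0 + Polynomial.C (PBpoly b)).Monic :=
    Polynomial.monic_X_pow_add_C _ ha0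
  have hdeg : (Polynomial.X ^ a 0 + Polynomial.C (PBpoly b)).natDegree = a 0 :=
    Polynomial.natDegree_X_pow_add_C
  have hPp : (Ideal.span {π}).IsPrime := (Ideal.span_singleton_prime hπ.ne_zero).2 hπ
  refine Polynomial.irreducible_of_eisenstein_criterion hPp ?_ ?_ ?_ ?_ hmon.isPrimitive
  · rw [hmon.leadingCoeff]
    exact fun h => hPp.ne_top ((Ideal.eq_top_iff_one _).2 h)
  · intro k hk
    rw [Polynomial.degree_eq_natDegree hmon.ne_zero, hdeg] at hk
    have hk' : k < a 0 := by exact_mod_cast hk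
    rw [Polynomial.coeff_add, Polynomial.coeff_X_pow, Polynomial.coeff_C, if_neg (by omega),
      zero_add]
    split_ifs
    · exact Ideal.mem_span_singleton.2 hπq
    · exact Ideal.zero_mem _
  · rw [← Polynomial.natDegree_pos_iff_degree_pos, hdeg]; omega
  · rw [Polynomial.coeff_add, Polynomial.coeff_X_pow, Polynomial.coeff_C, if_neg (by omega),
      zero_add, if_pos rfl, Ideal.span_singleton_pow, Ideal.mem_span_singleton]
    exact PBpoly_sqfree (by omega) b hb π hπ

theorem PBring_isDomain {n : ℕ} (hn : 3 ≤ n) (a : Fin n → ℕ) (ha : ∀ i, 1 ≤ a i) :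
    IsDomain (PBring ℂ a) := by
  have h := PBpoly_prime hn a ha
  have : (Ideal.span {PBpoly a}).IsPrime := (Ideal.span_singleton_prime h.ne_zero).2 h
  exact Ideal.Quotient.isDomain (Ideal.span {PBpoly a})

/-- quotient map -/
def pbmk {n : ℕ} (a : Fin n → ℕ) : MvPolynomial (Fin n) ℂ →+* PBring ℂ a :=
  Ideal.Quotient.mk _

theorem pbmk_surj {n : ℕ} (a : Fin n → ℕ) : Function.Surjective (pbmk a) :=
  Ideal.Quotient.mk_surjective

theorem pbmk_eq_zero {n : ℕ} (a : Fin n → ℕ) (p : MvPolynomial (Fin n) ℂ) :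
    pbmk a p = 0 ↔ PBpoly a ∣ p := by
  rw [← Ideal.mem_span_singleton]
  exact Ideal.Quotient.eq_zero_iff_mem

/-- regular sequence property -/
theorem PB_reg {n : ℕ} (hn : 3 ≤ n) (a : Fin n → ℕ) (ha : ∀ i, 1 ≤ a i) {i j : Fin n}
    (hij : i ≠ j) (b : PBring ℂ a) (h : pbmk a (X i) ∣ pbmk a (X j) * b) :
    pbmk a (X i) ∣ b := by
  classical
  obtain ⟨p, rfl⟩ := pbmk_surj a b
  obtain ⟨c, hc⟩ := h
  obtain ⟨q, rfl⟩ := pbmk_surj a c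
  rw [← map_mul, ← map_mul, ← sub_eq_zero, ← map_sub, pbmk_eq_zero] at hc
  obtain ⟨r, hr⟩ := hc
  let s : MvPolynomial (Fin n) ℂ →ₐ[ℂ] MvPolynomial (Fin n) ℂ :=
    aeval (fun k => if k = i then 0 else X k)
  have hsdvd : ∀ p, X i ∣ p - s p := by
    intro p
    rw [← Ideal.mem_span_singleton, ← Ideal.Quotient.eq_zero_iff_mem, map_sub, sub_eq_zero]
    have : (Ideal.Quotient.mkₐ ℂ (Ideal.span {(X i : MvPolynomial (Fin n) ℂ)})) =
        (Ideal.Quotient.mkₐ ℂ (Ideal.span {(X i : MvPolynomial (Fin n) ℂ)})).comp s := by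
      apply MvPolynomial.algHom_ext
      intro k
      simp only [AlgHom.comp_apply, s, aeval_X]
      split_ifs with hk
      · subst hk
        rw [map_zero]
        exact Ideal.Quotient.eq_zero_iff_mem.2 (Ideal.mem_span_singleton_self _)
      · rfl
    exact DFunLike.congr_fun this p
  have hsX : s (X i) = 0 := by simp [s]
  have hsXj : s (X j) = X j := by simp [s, hij.symm]
  have h1 := congrArg s hr
  rw [map_sub, map_mul, map_mul, map_mul, hsX, hsXj, zero_mul, sub_zero] at h1
  obtain ⟨k, hki, hkj⟩ : ∃ k : Fin n, k ≠ i ∧ k ≠ j := by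
    have : ∃ k, k ∉ ({i, j} : Finset (Fin n)) := by
      by_contra hcon
      push Not at hcon
      have h2 : (Finset.univ : Finset (Fin n)) ⊆ {i, j} := fun x _ => hcon x
      have := Finset.card_le_card h2
      have h3 := Finset.card_le_two (a := i) (b := j)
      simp at this
      omega
    obtain ⟨k, hk⟩ := this
    simp at hk
    exact ⟨k, hk.1, hk.2⟩
  have hev : eval (Pi.single k 1 : Fin n → ℂ) (s (PBpoly a)) = 1 := by
    obtain ⟨t, ht⟩ := hsdvd (PBpoly a)
    have : s (PBpoly a) = PBpoly a - X i * t := by rw [← ht]; ring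
    rw [this, map_sub, eval_single_PBpoly a ha, map_mul, eval_X, Pi.single_eq_of_ne hki.symm]
    simp
  have hnd : ¬ X j ∣ s (PBpoly a) := X_not_dvd_of_eval _ hkj.symm (by rw [hev]; exact one_ne_zero)
  have hdr : X j ∣ s r := by
    have : X j ∣ s (PBpoly a) * s r := ⟨_, h1.symm⟩
    exact (MvPolynomial.X_prime.dvd_or_dvd this).resolve_left hnd
  obtain ⟨u, hu⟩ := hdr
  have h2 : s p = s (PBpoly a) * u := by
    have : (X j : MvPolynomial (Fin n) ℂ) * s p = X j * (s (PBpoly a) * u) := by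
      rw [h1, hu]; ring
    exact mul_left_cancel₀ (MvPolynomial.X_ne_zero j) this
  obtain ⟨t, ht⟩ := hsdvd p
  obtain ⟨t', ht'⟩ := hsdvd (PBpoly a)
  have h3 : p = X i * (t - t' * u) + PBpoly a * u := by
    linear_combination ht + h2 - u * ht'
  have h0 : pbmk a (PBpoly a) = 0 := (pbmk_eq_zero a _).2 dvd_rfl
  rw [h3, map_add, map_mul, map_mul, h0, zero_mul, add_zero]
  exact dvd_mul_right _ _

end PBdomain

section PBveronese

open MvPolynomial

/-- Weighted degree of an exponent vector. -/
def pwt {n : ℕ} (a : Fin n → ℕ) (m : Fin n →₀ ℕ) : ℕ := Finsupp.weight (fun i => Ltot a / a i) m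

theorem pwt_add {n : ℕ} (a : Fin n → ℕ) (m m' : Fin n →₀ ℕ) :
    pwt a (m + m') = pwt a m + pwt a m' := by simp [pwt]

theorem pwt_zero {n : ℕ} (a : Fin n → ℕ) : pwt a 0 = 0 := by simp [pwt]

theorem pwt_nsmul {n : ℕ} (a : Fin n → ℕ) (k : ℕ) (m : Fin n →₀ ℕ) :
    pwt a (k • m) = k * pwt a m := by simp [pwt]

theorem pwt_eq_sum {n : ℕ} (a : Fin n → ℕ) (m : Fin n →₀ ℕ) :
    pwt a m = ∑ i, m i * (Ltot a / a i) := by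
  simp [pwt, Finsupp.weight_apply, Finsupp.sum_fintype]

theorem dvd_Ltot {n : ℕ} (a : Fin n → ℕ) (i : Fin n) : a i ∣ Ltot a :=
  Finset.dvd_lcm (Finset.mem_univ i)

theorem pwt_single {n : ℕ} (a : Fin n → ℕ) (i : Fin n) :
    pwt a (Finsupp.single i (a i)) = Ltot a := by
  simp [pwt, Finsupp.weight_single, Nat.mul_div_cancel' (dvd_Ltot a i)]

/-- Projection on the monomials whose weighted degree is divisible by `d`. -/
def vproj {n : ℕ} (a : Fin n → ℕ) (d : ℕ) :
    MvPolynomial (Fin n) ℂ →ₗ[ℂ] MvPolynomial (Fin n) ℂ :=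
  (basisMonomials (Fin n) ℂ).constr ℂ fun m => if d ∣ pwt a m then monomial m 1 else 0

theorem vproj_monomial {n : ℕ} (a : Fin n → ℕ) (d : ℕ) (m : Fin n →₀ ℕ) (c : ℂ) :
    vproj a d (monomial m c) = if d ∣ pwt a m then monomial m c else 0 := by
  have h1 : (monomial m c : MvPolynomial (Fin n) ℂ) = c • basisMonomials (Fin n) ℂ m := by
    simp [coe_basisMonomials, smul_monomial]
  rw [h1, map_smul, vproj, Module.Basis.constr_basis]
  split_ifs
  · simp [coe_basisMonomials]
  · simp

theorem vproj_mul {n : ℕ} (a : Fin n → ℕ) (d : ℕ) (p q : MvPolynomial (Fin n) ℂ) :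
    vproj a d (vproj a d p * q) = vproj a d p * vproj a d q := by
  induction p using MvPolynomial.induction_on' with
  | add p1 p2 h1 h2 => simp only [map_add, add_mul, h1, h2]
  | monomial m c =>
    induction q using MvPolynomial.induction_on' with
    | add p1 p2 h1 h2 => simp only [map_add, mul_add, h1, h2]
    | monomial m' c' =>
      simp only [vproj_monomial]
      by_cases h : d ∣ pwt a m
      · rw [if_pos h, monomial_mul, vproj_monomial, pwt_add]
        simp only [Nat.dvd_add_right h]
        split_ifs
        · rw [monomial_mul]
        · rw [mul_zero]
      · simp [h]

theorem vproj_one {n : ℕ} (a : Fin n → ℕ) (d : ℕ) : vproj a d 1 = 1 := by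
  have : (1 : MvPolynomial (Fin n) ℂ) = monomial 0 1 := rfl
  rw [this, vproj_monomial, pwt_zero, if_pos (dvd_zero d)]

theorem vproj_vproj {n : ℕ} (a : Fin n → ℕ) (d : ℕ) (p : MvPolynomial (Fin n) ℂ) :
    vproj a d (vproj a d p) = vproj a d p := by
  have := vproj_mul a d p 1
  rwa [vproj_one, mul_one] at this

theorem vproj_PB {n : ℕ} (a : Fin n → ℕ) (d : ℕ) (q : MvPolynomial (Fin n) ℂ) :
    PBpoly a ∣ vproj a d (PBpoly a * q) := by
  induction q using MvPolynomial.induction_on' with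
  | add p1 p2 h1 h2 => rw [mul_add, map_add]; exact dvd_add h1 h2
  | monomial m c =>
    have h1 : PBpoly a * monomial m c = ∑ i, monomial (Finsupp.single i (a i) + m) c := by
      rw [PBpoly, Finset.sum_mul]
      refine Finset.sum_congr rfl fun i _ => ?_
      rw [X_pow_eq_monomial, monomial_mul, one_mul]
    by_cases h : d ∣ Ltot a + pwt a m
    · have : vproj a d (PBpoly a * monomial m c) = PBpoly a * monomial m c := by
        rw [h1, map_sum]
        refine Finset.sum_congr rfl fun i _ => ?_
        rw [vproj_monomial, pwt_add, pwt_single, if_pos h]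
      rw [this]; exact dvd_mul_right _ _
    · have : vproj a d (PBpoly a * monomial m c) = 0 := by
        rw [h1, map_sum]
        refine Finset.sum_eq_zero fun i _ => ?_
        rw [vproj_monomial, pwt_add, pwt_single, if_neg h]
      rw [this]; exact dvd_zero _

theorem pbmk_monomial_mem {n : ℕ} (a : Fin n → ℕ) (d : ℕ) (m : Fin n →₀ ℕ) (c : ℂ)
    (h : d ∣ pwt a m) : pbmk a (monomial m c) ∈ verZ (PBpiece ℂ a) d := by
  apply Subring.subset_closure
  refine Set.mem_biUnion (x := (pwt a m : ℤ)) ?_ ?_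
  · change (pwt a m : ℤ) ∈ AddSubgroup.zmultiples (d : ℤ)
    rw [Int.mem_zmultiples_iff]
    exact_mod_cast h
  · change _ ∈ PBpiece ℂ a _
    rw [PBpiece, if_pos (Int.natCast_nonneg _)]
    refine ⟨monomial m c, ?_, rfl⟩
    change IsWeightedHomogeneous _ _ _
    exact isWeightedHomogeneous_monomial _ _ _ (by simp [pwt])

theorem mem_verZ_iff {n : ℕ} (a : Fin n → ℕ) (d : ℕ) (x : PBring ℂ a) :
    x ∈ verZ (PBpiece ℂ a) d ↔ ∃ q, pbmk a (vproj a d q) = x := by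
  constructor
  · intro hx
    let S : Subring (PBring ℂ a) :=
      { carrier := {x | ∃ q, pbmk a (vproj a d q) = x}
        zero_mem' := ⟨0, by simp⟩
        one_mem' := ⟨1, by rw [vproj_one, map_one]⟩
        add_mem' := by
          rintro _ _ ⟨p, rfl⟩ ⟨q, rfl⟩
          exact ⟨p + q, by simp⟩
        neg_mem' := by
          rintro _ ⟨p, rfl⟩
          exact ⟨-p, by simp⟩
        mul_mem' := by
          rintro _ _ ⟨p, rfl⟩ ⟨q, rfl⟩
          refine ⟨vproj a d p * vproj a d q, ?_⟩
          rw [vproj_mul, vproj_vproj, map_mul] }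
    have hle : verZ (PBpiece ℂ a) d ≤ S := by
      refine Subring.closure_le.2 ?_
      intro y hy
      obtain ⟨m, hm, hy⟩ := Set.mem_iUnion₂.1 hy
      have hm' : (d : ℤ) ∣ m := Int.mem_zmultiples_iff.1 hm
      change y ∈ PBpiece ℂ a m at hy
      rw [PBpiece] at hy
      split_ifs at hy with h0
      · obtain ⟨p, hp, rfl⟩ := hy
        refine ⟨p, ?_⟩
        change IsWeightedHomogeneous _ p _ at hp
        have : vproj a d p = p := by
          conv_lhs => rw [← support_sum_monomial_coeff p]
          conv_rhs => rw [← support_sum_monomial_coeff p]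
          rw [map_sum]
          refine Finset.sum_congr rfl fun k hk => ?_
          have h1 := hp (mem_support_iff.1 hk)
          have h2 : pwt a k = m.toNat := h1
          rw [vproj_monomial, if_pos]
          rw [h2]
          have : ((m.toNat : ℕ) : ℤ) = m := Int.toNat_of_nonneg h0
          rw [← this] at hm'
          exact_mod_cast hm'
        rw [this]; rfl
      · have : y = 0 := by simpa using hy
        rw [this]; exact S.zero_mem
    exact hle hx
  · rintro ⟨q, rfl⟩
    induction q using MvPolynomial.induction_on' with
    | add p1 p2 h1 h2 => rw [map_add, map_add]; exact add_mem h1 h2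
    | monomial m c =>
      rw [vproj_monomial]
      split_ifs with h
      · exact pbmk_monomial_mem a d m c h
      · rw [map_zero]; exact zero_mem _

/-- generating monomials of the Veronese -/
def vmon {n : ℕ} (a : Fin n → ℕ) (d : ℕ) : Set (PBring ℂ a) :=
  {x | ∃ m c, d ∣ pwt a m ∧ pbmk a (monomial m c) = x}

theorem vmon_sub {n : ℕ} (a : Fin n → ℕ) (d : ℕ) : vmon a d ⊆ verZ (PBpiece ℂ a) d := by
  rintro _ ⟨m, c, h, rfl⟩
  exact pbmk_monomial_mem a d m c h

theorem verZ_sub_closure {n : ℕ} (a : Fin n → ℕ) (d : ℕ) :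
    (verZ (PBpiece ℂ a) d : Set (PBring ℂ a)) ⊆ AddSubgroup.closure (vmon a d) := by
  intro x hx
  obtain ⟨q, rfl⟩ := (mem_verZ_iff a d x).1 hx
  clear hx
  induction q using MvPolynomial.induction_on' with
  | add p1 p2 h1 h2 => rw [map_add, map_add]; exact add_mem h1 h2
  | monomial m c =>
    rw [vproj_monomial]
    split_ifs with h
    · exact AddSubgroup.subset_closure ⟨m, c, h, rfl⟩
    · rw [map_zero]; exact zero_mem _

theorem verZ_mono {n : ℕ} (a : Fin n → ℕ) {g d : ℕ} (h : g ∣ d) :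
    verZ (PBpiece ℂ a) d ≤ verZ (PBpiece ℂ a) g := by
  intro x hx
  have h1 := verZ_sub_closure a d hx
  have h2 : AddSubgroup.closure (vmon a d) ≤ (verZ (PBpiece ℂ a) g).toAddSubgroup := by
    rw [AddSubgroup.closure_le]
    rintro _ ⟨m, c, hm, rfl⟩
    exact pbmk_monomial_mem a g m c (h.trans hm)
  exact h2 h1

theorem verZ_cancel {n : ℕ} (a : Fin n → ℕ) [IsDomain (PBring ℂ a)] (d : ℕ)
    (α : PBring ℂ a) (hα : α ∈ verZ (PBpiece ℂ a) d) (z : PBring ℂ a) (hα0 : α ≠ 0)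
    (h : α * z ∈ verZ (PBpiece ℂ a) d) : z ∈ verZ (PBpiece ℂ a) d := by
  obtain ⟨p, rfl⟩ := (mem_verZ_iff a d _).1 hα
  obtain ⟨q, rfl⟩ := pbmk_surj a z
  obtain ⟨r, hr⟩ := (mem_verZ_iff a d _).1 h
  rw [← map_mul, ← sub_eq_zero, ← map_sub, pbmk_eq_zero] at hr
  obtain ⟨t, ht⟩ := hr
  have h1 := vproj_PB a d t
  rw [← ht, map_sub, vproj_vproj, vproj_mul, ← pbmk_eq_zero, map_sub, sub_eq_zero, map_mul] at h1
  have h2 : PBpoly a ∣ vproj a d r - vproj a d p * q := ⟨t, ht⟩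
  rw [← pbmk_eq_zero, map_sub, sub_eq_zero, map_mul] at h2
  have h3 := mul_left_cancel₀ hα0 (h2.symm.trans h1)
  exact (mem_verZ_iff a d _).2 ⟨q, h3.symm⟩

theorem vmon_pow {n : ℕ} (a : Fin n → ℕ) (d : ℕ) (m : Fin n →₀ ℕ) (c : ℂ) :
    pbmk a (monomial m c) ^ d ∈ verZ (PBpiece ℂ a) d := by
  rw [← map_pow, monomial_pow]
  apply pbmk_monomial_mem
  rw [pwt_nsmul]
  exact dvd_mul_right _ _

theorem verZ_integral {n : ℕ} (a : Fin n → ℕ) (d : ℕ) (hd : 0 < d) :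
    Algebra.IsIntegral (verZ (PBpiece ℂ a) d) (PBring ℂ a) := by
  refine ⟨fun x => ?_⟩
  obtain ⟨p, rfl⟩ := pbmk_surj a x
  induction p using MvPolynomial.induction_on' with
  | add p1 p2 h1 h2 => rw [map_add]; exact h1.add h2
  | monomial m c =>
    refine IsIntegral.of_pow hd ?_
    exact isIntegral_algebraMap (x := (⟨_, vmon_pow a d m c⟩ : verZ (PBpiece ℂ a) d))

end PBveronese

section PBarith

/-- The quotient `L / Lᵢ`. -/
def ell {n : ℕ} (a : Fin n → ℕ) (i : Fin n) : ℕ := Ltot a / Lpart a i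

theorem Ltot_pos {n : ℕ} (a : Fin n → ℕ) (ha : ∀ i, 1 ≤ a i) : 0 < Ltot a := by
  rw [Nat.pos_iff_ne_zero, Ltot, Ne, Finset.lcm_eq_zero_iff]
  rintro ⟨i, _, h⟩
  have := ha i
  omega

theorem Lpart_dvd {n : ℕ} (a : Fin n → ℕ) (i : Fin n) : Lpart a i ∣ Ltot a :=
  Finset.lcm_dvd fun j _ => dvd_Ltot a j

theorem Lpart_pos {n : ℕ} (a : Fin n → ℕ) (ha : ∀ i, 1 ≤ a i) (i : Fin n) : 0 < Lpart a i :=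
  Nat.pos_of_dvd_of_pos (Lpart_dvd a i) (Ltot_pos a ha)

theorem dvd_Lpart {n : ℕ} (a : Fin n → ℕ) {i j : Fin n} (h : j ≠ i) : a j ∣ Lpart a i :=
  Finset.dvd_lcm (Finset.mem_erase.2 ⟨h, Finset.mem_univ j⟩)

theorem Ltot_eq {n : ℕ} (a : Fin n → ℕ) (i : Fin n) : Ltot a = Nat.lcm (a i) (Lpart a i) := by
  apply Nat.dvd_antisymm
  · refine Finset.lcm_dvd fun j _ => ?_
    by_cases h : j = i
    · subst h; exact Nat.dvd_lcm_left _ _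
    · exact (dvd_Lpart a h).trans (Nat.dvd_lcm_right _ _)
  · exact Nat.lcm_dvd (dvd_Ltot a i) (Lpart_dvd a i)

theorem ell_mul {n : ℕ} (a : Fin n → ℕ) (i : Fin n) : ell a i * Lpart a i = Ltot a :=
  Nat.div_mul_cancel (Lpart_dvd a i)

theorem ell_pos {n : ℕ} (a : Fin n → ℕ) (ha : ∀ i, 1 ≤ a i) (i : Fin n) : 0 < ell a i :=
  Nat.div_pos (Nat.le_of_dvd (Ltot_pos a ha) (Lpart_dvd a i)) (Lpart_pos a ha i)

theorem gcd_mul_ell {n : ℕ} (a : Fin n → ℕ) (ha : ∀ i, 1 ≤ a i) (i : Fin n) :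
    Nat.gcd (a i) (Lpart a i) * ell a i = a i := by
  have h1 := Nat.gcd_mul_lcm (a i) (Lpart a i)
  rw [← Ltot_eq, ← ell_mul a i, ← mul_assoc] at h1
  exact Nat.eq_of_mul_eq_mul_right (Lpart_pos a ha i) h1

theorem ell_dvd_a {n : ℕ} (a : Fin n → ℕ) (ha : ∀ i, 1 ≤ a i) (i : Fin n) : ell a i ∣ a i :=
  ⟨_, (gcd_mul_ell a ha i).symm.trans (mul_comm _ _)⟩

theorem ell_dvd_w {n : ℕ} (a : Fin n → ℕ) (ha : ∀ i, 1 ≤ a i) {i j : Fin n} (h : j ≠ i) :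
    ell a i ∣ Ltot a / a j := by
  obtain ⟨c, hc⟩ := dvd_Lpart a h
  refine ⟨c, ?_⟩
  rw [← ell_mul a i, hc]
  refine Nat.div_eq_of_eq_mul_right (ha j) ?_
  ring

theorem ell_coprime_w {n : ℕ} (a : Fin n → ℕ) (ha : ∀ i, 1 ≤ a i) (i : Fin n) :
    Nat.Coprime (ell a i) (Ltot a / a i) := by
  have hg : 0 < Nat.gcd (a i) (Lpart a i) := Nat.gcd_pos_of_pos_left _ (ha i)
  have h := Nat.coprime_div_gcd_div_gcd hg
  have h1 : a i / Nat.gcd (a i) (Lpart a i) = ell a i := by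
    conv_lhs => enter [1]; rw [← gcd_mul_ell a ha i]
    exact Nat.mul_div_cancel_left _ hg
  have h2 : Ltot a / a i = Lpart a i / Nat.gcd (a i) (Lpart a i) := by
    refine Nat.div_eq_of_eq_mul_right (ha i) ?_
    obtain ⟨c, hc⟩ := Nat.gcd_dvd_right (a i) (Lpart a i)
    have h3 : Lpart a i / Nat.gcd (a i) (Lpart a i) = c := Nat.div_eq_of_eq_mul_right hg hc
    rw [h3, ← ell_mul a i]
    conv_lhs => rw [hc]
    conv_rhs => rw [← gcd_mul_ell a ha i]
    ring
  rw [h1] at h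
  rw [h2]; exact h

theorem ell_coprime {n : ℕ} (a : Fin n → ℕ) (ha : ∀ i, 1 ≤ a i) {i j : Fin n} (h : i ≠ j) :
    Nat.Coprime (ell a i) (ell a j) :=
  (ell_coprime_w a ha i).coprime_dvd_right (ell_dvd_w a ha h)

theorem PBexp_mul {n : ℕ} (a : Fin n → ℕ) (ha : ∀ i, 1 ≤ a i) (d : ℕ) (i : Fin n) :
    Nat.gcd d (ell a i) * PBexp a d i = a i := by
  change _ * (_ * (ell a i / Nat.gcd d (ell a i))) = _
  rw [mul_left_comm, Nat.mul_div_cancel' (Nat.gcd_dvd_right _ _), gcd_mul_ell a ha i]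

theorem PBexp_pos {n : ℕ} (a : Fin n → ℕ) (ha : ∀ i, 1 ≤ a i) (d : ℕ) (i : Fin n) :
    1 ≤ PBexp a d i := by
  have := PBexp_mul a ha d i
  have := ha i
  by_contra h
  have : PBexp a d i = 0 := by omega
  simp_all

theorem bezout_pwt {n : ℕ} (hn : 3 ≤ n) (a : Fin n → ℕ) (ha : ∀ i, 1 ≤ a i) (d : ℕ) (hd : 0 < d) (i : Fin n)
    (t : ℕ) (ht : Nat.gcd d (ell a i) ∣ t) :
    ∃ h : Fin n →₀ ℕ, h i = 0 ∧ d ∣ pwt a h + t := by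
  classical
  let v : Fin n → ℤ := fun j => if j = i then 0 else ((Ltot a / a j : ℕ) : ℤ)
  let I : Ideal ℤ := Ideal.span (Set.range v)
  obtain ⟨γ, hγ⟩ : ∃ γ : ℤ, I = Ideal.span {γ} := ⟨_, (Ideal.span_singleton_generator I).symm⟩
  have hdv : ∀ j, γ ∣ v j := fun j => by
    rw [← Ideal.mem_span_singleton, ← hγ]
    exact Ideal.subset_span ⟨j, rfl⟩
  have hL := Ltot_pos a ha
  have hg : γ.natAbs ∣ ell a i := by
    have hj : ∀ j, j ≠ i → a j * γ.natAbs ∣ Ltot a := fun j hj => by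
      have h := hdv j
      simp only [v, if_neg hj] at h
      have h2 : γ.natAbs ∣ Ltot a / a j := Int.natAbs_dvd_natAbs.2 h
      have := Nat.mul_dvd_mul_left (a j) h2
      rwa [Nat.mul_div_cancel' (dvd_Ltot a j)] at this
    obtain ⟨j0, hj0⟩ := Fintype.exists_ne_of_one_lt_card (by simp; omega : 1 < Fintype.card (Fin n)) i
    have h0 : γ.natAbs ∣ Ltot a := (Dvd.intro_left _ rfl).trans (hj j0 hj0)
    have hp : 0 < γ.natAbs := Nat.pos_of_dvd_of_pos h0 hL
    have : Lpart a i ∣ Ltot a / γ.natAbs := Finset.lcm_dvd fun j hj' =>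
      (Nat.dvd_div_iff_mul_dvd h0).2 (by rw [mul_comm]; exact hj j (Finset.ne_of_mem_erase hj'))
    have h3 := (Nat.dvd_div_iff_mul_dvd h0).1 this
    exact (Nat.dvd_div_iff_mul_dvd (Lpart_dvd a i)).2 (by rwa [mul_comm] at h3)
  have hγI : γ ∈ I := by rw [hγ]; exact Ideal.mem_span_singleton_self γ
  obtain ⟨c, hc⟩ := (Ideal.mem_span_range_iff_exists_fun).1 hγI
  have h1 : ((Int.gcd d γ : ℕ) : ℤ) ∣ t := by
    have : Int.gcd d γ ∣ Nat.gcd d (ell a i) := by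
      change Nat.gcd _ _ ∣ _
      simpa using Nat.gcd_dvd_gcd_of_dvd_right d hg
    exact_mod_cast this.trans ht
  obtain ⟨s, hs⟩ := h1
  have hb := Int.gcd_eq_gcd_ab d γ
  let f : Fin n → ℕ := fun j => if j = i then 0 else ((-(s * Int.gcdB d γ * c j)) % (d : ℤ)).toNat
  refine ⟨Finsupp.equivFunOnFinite.symm f, by simp [f], ?_⟩
  rw [← Int.natCast_dvd_natCast, pwt_eq_sum]
  have hd' : (d : ℤ) ≠ 0 := by exact_mod_cast hd.ne'
  have key : ∀ j, (d : ℤ) ∣ (f j : ℤ) * ((Ltot a / a j : ℕ) : ℤ)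
      + s * Int.gcdB d γ * (c j * v j) := by
    intro j
    by_cases hji : j = i
    · simp [f, v, hji]
    · have : ((f j : ℕ) : ℤ) = (-(s * Int.gcdB d γ * c j)) % (d : ℤ) := by
        simp only [f, if_neg hji]
        exact Int.toNat_of_nonneg (Int.emod_nonneg _ hd')
      rw [this]
      simp only [v, if_neg hji]
      have h4 := Int.emod_add_mul_ediv (-(s * Int.gcdB d γ * c j)) d
      refine ⟨-((-(s * Int.gcdB d γ * c j)) / d) * ((Ltot a / a j : ℕ) : ℤ), ?_⟩
      linear_combination ((Ltot a / a j : ℕ) : ℤ) * h4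
  have hsum := Finset.dvd_sum (s := Finset.univ) fun j _ => key j
  rw [Finset.sum_add_distrib, ← Finset.mul_sum, hc] at hsum
  have h5 : (d : ℤ) ∣ t - s * Int.gcdB d γ * γ := ⟨s * Int.gcdA d γ, by
    rw [hs, hb]; ring⟩
  have := dvd_add hsum h5
  have e : ∀ j, (Finsupp.equivFunOnFinite.symm f) j = f j := fun j => rfl
  have e2 : ((∑ j, (Finsupp.equivFunOnFinite.symm f) j * (Ltot a / a j) + t : ℕ) : ℤ)
      = ∑ x, (f x : ℤ) * ((Ltot a / a x : ℕ) : ℤ) + s * Int.gcdB d γ * γ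
        + (t - s * Int.gcdB d γ * γ) := by
    simp only [e]
    rw [Nat.cast_add, Nat.cast_sum]
    simp only [Nat.cast_mul]
    ring
  rw [e2]
  exact this

end PBarith

section PBlift

open MvPolynomial

/-- `v` is a nonzerodivisor modulo `u`. -/
def Reg {R : Type*} [CommRing R] (u v : R) : Prop := ∀ b, u ∣ v * b → u ∣ b

theorem Reg.one_left {R : Type*} [CommRing R] (v : R) : Reg 1 v := fun b _ => one_dvd b

theorem Reg.one_right {R : Type*} [CommRing R] (u : R) : Reg u 1 := fun b h => by
  rwa [one_mul] at h

theorem Reg.mul_right {R : Type*} [CommRing R] {u v w : R} (h : Reg u v) (h' : Reg u w) :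
    Reg u (v * w) := fun b hb => by
  rw [mul_assoc] at hb
  exact h' b (h _ hb)

theorem Reg.mul_left {R : Type*} [CommRing R] [IsDomain R] {u v w : R} (hu : u ≠ 0)
    (h : Reg u w) (h' : Reg v w) : Reg (u * v) w := fun b hb => by
  obtain ⟨c, rfl⟩ := h b ((dvd_mul_right u v).trans hb)
  rw [mul_left_comm] at hb
  exact mul_dvd_mul_left u (h' c ((mul_dvd_mul_iff_left hu).1 hb))

theorem Reg.prod_right {R ι : Type*} [CommRing R] {u : R} (s : Finset ι) (g : ι → R)
    (h : ∀ j ∈ s, Reg u (g j)) : Reg u (∏ j ∈ s, g j) := by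
  classical
  induction s using Finset.induction_on with
  | empty => exact Reg.one_right u
  | insert j s hj ih =>
    rw [Finset.prod_insert hj]
    exact (h j (Finset.mem_insert_self j s)).mul_right
      (ih fun k hk => h k (Finset.mem_insert_of_mem hk))

theorem Reg.prod_left {R ι : Type*} [CommRing R] [IsDomain R] {v : R} (s : Finset ι) (g : ι → R)
    (h0 : ∀ j ∈ s, g j ≠ 0) (h : ∀ j ∈ s, Reg (g j) v) : Reg (∏ j ∈ s, g j) v := by
  classical
  induction s using Finset.induction_on with
  | empty => exact Reg.one_left v
  | insert j s hj ih =>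
    rw [Finset.prod_insert hj]
    exact Reg.mul_left (h0 j (Finset.mem_insert_self j s)) (h j (Finset.mem_insert_self j s))
      (ih (fun k hk => h0 k (Finset.mem_insert_of_mem hk))
        fun k hk => h k (Finset.mem_insert_of_mem hk))

theorem Reg.pow {R : Type*} [CommRing R] [IsDomain R] {u v : R} (hu : u ≠ 0) (h : Reg u v)
    (k l : ℕ) : Reg (u ^ k) (v ^ l) := by
  have h1 : Reg u (v ^ l) := by
    have := Reg.prod_right (u := u) (Finset.range l) (fun _ => v) fun _ _ => h
    rwa [Finset.prod_const, Finset.card_range] at this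
  have := Reg.prod_left (v := v ^ l) (Finset.range k) (fun _ => u) (fun _ _ => hu) fun _ _ => h1
  rwa [Finset.prod_const, Finset.card_range] at this

/-- The image of a monomial. -/
def xm {n : ℕ} (a : Fin n → ℕ) (m : Fin n →₀ ℕ) : PBring ℂ a := pbmk a (monomial m 1)

theorem xm_add {n : ℕ} (a : Fin n → ℕ) (m m' : Fin n →₀ ℕ) : xm a (m + m') = xm a m * xm a m' := by
  rw [xm, xm, xm, ← map_mul, monomial_mul, one_mul]

theorem xm_nsmul {n : ℕ} (a : Fin n → ℕ) (k : ℕ) (m : Fin n →₀ ℕ) : xm a (k • m) = xm a m ^ k := by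
  rw [xm, xm, ← map_pow, monomial_pow, one_pow]

theorem xm_zero {n : ℕ} (a : Fin n → ℕ) : xm a 0 = 1 := map_one (pbmk a)

theorem xm_eq_prod {n : ℕ} (a : Fin n → ℕ) (m : Fin n →₀ ℕ) :
    xm a m = ∏ i, pbmk a (X i) ^ m i := by
  rw [xm, monomial_eq, C_1, one_mul, Finsupp.prod_fintype _ _ (fun i => pow_zero _), map_prod]
  simp only [map_pow]

theorem pbmk_X_ne {n : ℕ} (hn : 3 ≤ n) (a : Fin n → ℕ) (ha : ∀ i, 1 ≤ a i) (i : Fin n) :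
    pbmk a (X i) ≠ 0 := by
  rw [Ne, pbmk_eq_zero]
  intro h
  obtain ⟨k, hk⟩ := Fintype.exists_ne_of_one_lt_card
    (by simp; omega : 1 < Fintype.card (Fin n)) i
  have h1 := (PBpoly_prime hn a ha).associated_of_dvd MvPolynomial.X_prime h
  refine X_not_dvd_of_eval (PBpoly a) hk.symm ?_ h1.symm.dvd
  rw [eval_single_PBpoly a ha]
  exact one_ne_zero

theorem xm_ne {n : ℕ} (hn : 3 ≤ n) (a : Fin n → ℕ) (ha : ∀ i, 1 ≤ a i) (m : Fin n →₀ ℕ) :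
    xm a m ≠ 0 := by
  have := PBring_isDomain hn a ha
  rw [xm_eq_prod]
  exact Finset.prod_ne_zero_iff.2 fun i _ => pow_ne_zero _ (pbmk_X_ne hn a ha i)

theorem xm_reg {n : ℕ} (hn : 3 ≤ n) (a : Fin n → ℕ) (ha : ∀ i, 1 ≤ a i) (m m' : Fin n →₀ ℕ)
    (h : ∀ i, m i = 0 ∨ m' i = 0) : Reg (xm a m) (xm a m') := by
  have := PBring_isDomain hn a ha
  rw [xm_eq_prod, xm_eq_prod]
  refine Reg.prod_left _ _ (fun i _ => pow_ne_zero _ (pbmk_X_ne hn a ha i)) fun i _ => ?_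
  refine Reg.prod_right _ _ fun j _ => ?_
  by_cases hij : i = j
  · subst hij
    rcases h i with h | h
    · rw [h, pow_zero]; exact Reg.one_left _
    · rw [h, pow_zero]; exact Reg.one_right _
  · exact Reg.pow (pbmk_X_ne hn a ha i) (fun b hb => PB_reg hn a ha hij b hb) _ _

theorem denom_inf {n : ℕ} (hn : 3 ≤ n) (a : Fin n → ℕ) (ha : ∀ i, 1 ≤ a i)
    {K : Type*} [Field K] [Algebra (PBring ℂ a) K] [IsFractionRing (PBring ℂ a) K] (z : K)
    (s t : Fin n →₀ ℕ)
    (hs : ∃ b : PBring ℂ a, algebraMap _ K (xm a s) * z = algebraMap _ K b)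
    (ht : ∃ b : PBring ℂ a, algebraMap _ K (xm a t) * z = algebraMap _ K b) :
    ∃ b : PBring ℂ a, algebraMap _ K (xm a (s ⊓ t)) * z = algebraMap _ K b := by
  have hdom := PBring_isDomain hn a ha
  obtain ⟨b, hb⟩ := hs
  obtain ⟨b', hb'⟩ := ht
  have hinj : Function.Injective (algebraMap (PBring ℂ a) K) := IsFractionRing.injective _ K
  have es : s = (s - s ⊓ t) + s ⊓ t := by
    ext i; simp
  have et : t = (t - s ⊓ t) + s ⊓ t := by
    ext i; simp
  set s' := s - s ⊓ t with hs'
  set t' := t - s ⊓ t with ht'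
  have hdis : ∀ i, s' i = 0 ∨ t' i = 0 := fun i => by
    simp only [hs', ht', Finsupp.tsub_apply, Finsupp.inf_apply]
    omega
  set r := s ⊓ t with hr
  rw [es, xm_add, map_mul, mul_assoc] at hb
  rw [et, xm_add, map_mul, mul_assoc] at hb'
  have h1 : xm a t' * b = xm a s' * b' := by
    apply hinj
    rw [map_mul, map_mul, ← hb, ← hb']
    ring
  obtain ⟨e, he⟩ := xm_reg hn a ha s' t' hdis b ⟨b', h1⟩
  refine ⟨e, ?_⟩
  rw [he, map_mul] at hb
  refine mul_left_cancel₀ ?_ hb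
  intro h0
  exact xm_ne hn a ha s' (hinj (by rw [h0, map_zero]))

theorem lift_PB {n : ℕ} (hn : 3 ≤ n) (a : Fin n → ℕ) (ha : ∀ i, 1 ≤ a i) (d : ℕ) (hd : 0 < d)
    (g : ℕ) (hg : g ∣ d) (hgl : ∀ i, Nat.gcd d (ell a i) ∣ g)
    (h : NonRigid (verZ (PBpiece ℂ a) d)) : NonRigid (verZ (PBpiece ℂ a) g) := by
  have hdom := PBring_isDomain hn a ha
  have hcz : CharZero (PBring ℂ a) := charZero_of_injective_algebraMap
    (algebraMap ℂ (PBring ℂ a)).injective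
  refine lift_nonrigid (K := FractionRing (PBring ℂ a)) (verZ (PBpiece ℂ a) d)
    (verZ (PBpiece ℂ a) g) (verZ_mono a hg) d hd (pbmk a (C ((d : ℂ)⁻¹))) ?_ (vmon a g)
    (vmon_sub a g) (verZ_sub_closure a g) ?_ (verZ_cancel a d) ?_ (verZ_integral a d hd) ?_ h
  · have : ((d : ℕ) : PBring ℂ a) = pbmk a (C (d : ℂ)) := by simp
    rw [this, ← map_mul, ← C_mul, inv_mul_cancel₀ (by exact_mod_cast hd.ne'), C_1, map_one]
  · rintro _ ⟨m, c, _, rfl⟩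
    exact vmon_pow a d m c
  · intro α hα z h0 h1
    exact verZ_cancel a g α (verZ_mono a hg hα) z h0 h1
  · rintro _ ⟨m, c, hm, rfl⟩ z hz
    have key : ∀ i, ∃ s : Fin n →₀ ℕ, s i = 0 ∧ ∃ b : PBring ℂ a,
        algebraMap _ (FractionRing (PBring ℂ a)) (xm a s) * z = algebraMap _ _ b := by
      intro i
      obtain ⟨s, hs, hsd⟩ := bezout_pwt hn a ha d hd i (pwt a m) ((hgl i).trans hm)
      refine ⟨(d + 1) • s, by simp [hs], ?_⟩
      obtain ⟨b, hb⟩ := hz (xm a s) (xm_ne hn a ha s) (by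
        rw [xm, ← map_mul, monomial_mul]
        exact pbmk_monomial_mem a d _ _ (by rwa [pwt_add])) (vmon_pow a d s 1)
      exact ⟨b, by rw [xm_nsmul, map_pow]; exact hb⟩
    have key2 : ∀ S : Finset (Fin n), ∃ s : Fin n →₀ ℕ, (∀ i ∈ S, s i = 0) ∧ ∃ b : PBring ℂ a,
        algebraMap _ (FractionRing (PBring ℂ a)) (xm a s) * z = algebraMap _ _ b := by
      intro S
      induction S using Finset.induction_on with
      | empty =>
        obtain ⟨s, _, hs⟩ := key ⟨0, by omega⟩
        exact ⟨s, by simp, hs⟩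
      | insert j S hj ih =>
        obtain ⟨s, hs0, hs⟩ := ih
        obtain ⟨t, ht0, ht⟩ := key j
        refine ⟨s ⊓ t, ?_, denom_inf hn a ha z s t hs ht⟩
        intro i hi
        rw [Finsupp.inf_apply]
        rcases Finset.mem_insert.1 hi with rfl | hi
        · simp [ht0]
        · simp [hs0 i hi]
    obtain ⟨s, hs, b, hb⟩ := key2 Finset.univ
    have : s = 0 := by ext i; exact hs i (Finset.mem_univ i)
    rw [this, xm_zero, map_one, one_mul] at hb
    exact ⟨b, hb⟩

end PBlift

section PBiso

open MvPolynomial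

/-- Componentwise multiplication of an exponent vector. -/
def emul {n : ℕ} (e : Fin n → ℕ) (m : Fin n →₀ ℕ) : Fin n →₀ ℕ :=
  Finsupp.equivFunOnFinite.symm fun i => e i * m i

/-- Componentwise division of an exponent vector. -/
def ediv {n : ℕ} (e : Fin n → ℕ) (m : Fin n →₀ ℕ) : Fin n →₀ ℕ :=
  Finsupp.equivFunOnFinite.symm fun i => m i / e i

theorem emul_apply {n : ℕ} (e : Fin n → ℕ) (m : Fin n →₀ ℕ) (i : Fin n) :
    emul e m i = e i * m i := rfl

theorem ediv_apply {n : ℕ} (e : Fin n → ℕ) (m : Fin n →₀ ℕ) (i : Fin n) :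
    ediv e m i = m i / e i := rfl

/-- The substitution `Xᵢ ↦ Xᵢ ^ eᵢ`. -/
def psub {n : ℕ} (e : Fin n → ℕ) : MvPolynomial (Fin n) ℂ →ₐ[ℂ] MvPolynomial (Fin n) ℂ :=
  aeval fun i => X i ^ e i

theorem psub_monomial {n : ℕ} (e : Fin n → ℕ) (m : Fin n →₀ ℕ) (c : ℂ) :
    psub e (monomial m c) = monomial (emul e m) c := by
  rw [psub, aeval_monomial, monomial_eq (s := emul e m), Finsupp.prod_fintype _ _ (by simp),
    Finsupp.prod_fintype _ _ (by simp)]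
  simp only [emul_apply, pow_mul]
  rfl

/-- A linear retraction of `psub`. -/
def pret {n : ℕ} (e : Fin n → ℕ) : MvPolynomial (Fin n) ℂ →ₗ[ℂ] MvPolynomial (Fin n) ℂ :=
  (basisMonomials (Fin n) ℂ).constr ℂ fun m =>
    if ∀ i, e i ∣ m i then monomial (ediv e m) 1 else 0

theorem pret_monomial {n : ℕ} (e : Fin n → ℕ) (m : Fin n →₀ ℕ) (c : ℂ) :
    pret e (monomial m c) = if ∀ i, e i ∣ m i then monomial (ediv e m) c else 0 := by
  have h1 : (monomial m c : MvPolynomial (Fin n) ℂ) = c • basisMonomials (Fin n) ℂ m := by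
    simp [coe_basisMonomials, smul_monomial]
  rw [h1, map_smul, pret, Module.Basis.constr_basis]
  split_ifs
  · simp [smul_monomial]
  · simp

theorem pret_psub_mul {n : ℕ} (e : Fin n → ℕ) (he : ∀ i, 0 < e i)
    (p q : MvPolynomial (Fin n) ℂ) : pret e (psub e p * q) = p * pret e q := by
  induction p using MvPolynomial.induction_on' with
  | add p1 p2 h1 h2 => simp only [map_add, add_mul, h1, h2]
  | monomial m c =>
    induction q using MvPolynomial.induction_on' with
    | add p1 p2 h1 h2 => simp only [map_add, mul_add, h1, h2]
    | monomial m' c' =>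
      rw [psub_monomial, monomial_mul, pret_monomial, pret_monomial]
      have hiff : (∀ i, e i ∣ (emul e m + m') i) ↔ ∀ i, e i ∣ m' i := by
        refine forall_congr' fun i => ?_
        rw [Finsupp.add_apply, emul_apply, Nat.dvd_add_right (dvd_mul_right _ _)]
      by_cases h : ∀ i, e i ∣ m' i
      · rw [if_pos (hiff.2 h), if_pos h, monomial_mul]
        congr 1
        congr 1
        ext i
        rw [ediv_apply, Finsupp.add_apply, Finsupp.add_apply, emul_apply, ediv_apply,
          Nat.mul_add_div (he i)]
      · rw [if_neg (fun h' => h (hiff.1 h')), if_neg h, mul_zero]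

theorem psub_PB {n : ℕ} (e a' a : Fin n → ℕ) (h : ∀ i, e i * a' i = a i) :
    psub e (PBpoly a') = PBpoly a := by
  simp only [PBpoly, map_sum, map_pow, psub, aeval_X, ← pow_mul, h]

/-- The map on Pham-Brieskorn rings induced by `Xᵢ ↦ Xᵢ ^ eᵢ`. -/
def pbsub {n : ℕ} (e a' a : Fin n → ℕ) (h : ∀ i, e i * a' i = a i) : PBring ℂ a' →+* PBring ℂ a :=
  Ideal.Quotient.lift _ ((pbmk a).comp (psub e).toRingHom) (by
    intro p hp
    obtain ⟨q, rfl⟩ := Ideal.mem_span_singleton.1 hp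
    change pbmk a (psub e (PBpoly a' * q)) = 0
    rw [pbmk_eq_zero, map_mul, psub_PB e a' a h]
    exact dvd_mul_right _ _)

theorem pbsub_mk {n : ℕ} (e a' a : Fin n → ℕ) (h : ∀ i, e i * a' i = a i)
    (p : MvPolynomial (Fin n) ℂ) : pbsub e a' a h (pbmk a' p) = pbmk a (psub e p) := rfl

theorem pbsub_inj {n : ℕ} (e a' a : Fin n → ℕ) (h : ∀ i, e i * a' i = a i) (he : ∀ i, 0 < e i) :
    Function.Injective (pbsub e a' a h) := by
  rw [injective_iff_map_eq_zero]
  intro x hx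
  obtain ⟨p, rfl⟩ := pbmk_surj a' x
  rw [pbsub_mk, pbmk_eq_zero] at hx
  obtain ⟨q, hq⟩ := hx
  rw [← psub_PB e a' a h] at hq
  have h1 := congrArg (pret e) hq
  have h0 : pret e 1 = 1 := by
    have : (1 : MvPolynomial (Fin n) ℂ) = monomial 0 1 := rfl
    rw [this, pret_monomial, if_pos (by simp)]
    have h3 : ediv e 0 = 0 := by
      ext i
      simp [ediv_apply]
    rw [h3]
  have h2 := pret_psub_mul e he p 1
  rw [mul_one, h0, mul_one] at h2
  rw [h2, pret_psub_mul e he] at h1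
  rw [h1, pbmk_eq_zero]
  exact dvd_mul_right _ _

theorem dvd_pwt_iff {n : ℕ} (a : Fin n → ℕ) (ha : ∀ i, 1 ≤ a i) (g : ℕ)
    (hg : g ∣ ∏ i, ell a i) (m : Fin n →₀ ℕ) :
    g ∣ pwt a m ↔ ∀ i, Nat.gcd g (ell a i) ∣ m i := by
  constructor
  · intro h i
    have h1 : Nat.gcd g (ell a i) ∣ pwt a m := (Nat.gcd_dvd_left _ _).trans h
    rw [pwt_eq_sum, ← Finset.add_sum_erase _ _ (Finset.mem_univ i)] at h1
    have h2 : Nat.gcd g (ell a i) ∣ ∑ j ∈ Finset.univ.erase i, m j * (Ltot a / a j) :=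
      Finset.dvd_sum fun j hj => Dvd.dvd.mul_left
        ((Nat.gcd_dvd_right _ _).trans (ell_dvd_w a ha (Finset.ne_of_mem_erase hj))) _
    have h3 := (Nat.dvd_add_left h2).1 h1
    exact ((ell_coprime_w a ha i).coprime_dvd_left (Nat.gcd_dvd_right _ _)).dvd_of_dvd_mul_right h3
  · intro h
    rw [pwt_eq_sum]
    refine Finset.dvd_sum fun i _ => ?_
    refine Dvd.dvd.trans ?_ (Nat.mul_dvd_mul_right (h i) _)
    have h1 : ∏ j ∈ Finset.univ.erase i, ell a j ∣ Ltot a / a i := by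
      refine Finset.prod_dvd_of_isRelPrime ?_ fun j hj => ell_dvd_w a ha (Finset.ne_of_mem_erase hj).symm
      intro j _ k _ hjk
      exact Nat.coprime_iff_isRelPrime.1 (ell_coprime a ha hjk)
    rw [← Finset.mul_prod_erase _ _ (Finset.mem_univ i)] at hg
    have h2 : g = Nat.gcd g (ell a i * ∏ j ∈ Finset.univ.erase i, ell a j) :=
      (Nat.gcd_eq_left hg).symm
    rw [h2]
    conv_rhs => rw [← h2]
    exact (Nat.gcd_mul_right_dvd_mul_gcd _ _ _).trans
      (Nat.mul_dvd_mul_left _ ((Nat.gcd_dvd_right _ _).trans h1))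

theorem verZ_iso {n : ℕ} (a : Fin n → ℕ) (ha : ∀ i, 1 ≤ a i) (g : ℕ) (hg : g ∣ ∏ i, ell a i) :
    Nonempty (PBring ℂ (PBexp a g) ≃+* verZ (PBpiece ℂ a) g) := by
  let e : Fin n → ℕ := fun i => Nat.gcd g (ell a i)
  have he : ∀ i, 0 < e i := fun i => Nat.gcd_pos_of_pos_right _ (ell_pos a ha i)
  have h : ∀ i, e i * PBexp a g i = a i := PBexp_mul a ha g
  let θ := pbsub e (PBexp a g) a h
  have hθ : ∀ x, θ x ∈ verZ (PBpiece ℂ a) g := by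
    intro x
    obtain ⟨p, rfl⟩ := pbmk_surj _ x
    induction p using MvPolynomial.induction_on' with
    | add p1 p2 h1 h2 => rw [map_add, map_add]; exact add_mem h1 h2
    | monomial m c =>
      change pbmk a (psub e _) ∈ _
      rw [psub_monomial]
      apply pbmk_monomial_mem
      rw [dvd_pwt_iff a ha g hg]
      intro i
      exact dvd_mul_right _ _
  refine ⟨RingEquiv.ofBijective (θ.codRestrict (verZ (PBpiece ℂ a) g) hθ) ⟨?_, ?_⟩⟩
  · intro x y hxy
    exact pbsub_inj e (PBexp a g) a h he (congrArg Subtype.val hxy)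
  · rintro ⟨y, hy⟩
    have : y ∈ θ.range := by
      have h1 := verZ_sub_closure a g hy
      have h2 : AddSubgroup.closure (vmon a g) ≤ θ.range.toAddSubgroup := by
        rw [AddSubgroup.closure_le]
        rintro _ ⟨m, c, hm, rfl⟩
        refine ⟨pbmk _ (monomial (ediv e m) c), ?_⟩
        change pbmk a (psub e _) = _
        have h3 : emul e (ediv e m) = m := by
          ext i
          rw [emul_apply, ediv_apply]
          exact Nat.mul_div_cancel' ((dvd_pwt_iff a ha g hg m).1 hm i)
        rw [psub_monomial, h3]
      exact h2 h1
    obtain ⟨x, hx⟩ := this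
    exact ⟨x, Subtype.ext hx⟩

end PBiso

section PBnonrigid

open MvPolynomial

theorem mkDerivation_PBpoly {n : ℕ} (a : Fin n → ℕ) (f : Fin n → MvPolynomial (Fin n) ℂ) :
    mkDerivation ℂ f (PBpoly a) = ∑ i, (a i : MvPolynomial (Fin n) ℂ) * X i ^ (a i - 1) * f i := by
  rw [PBpoly, map_sum]
  refine Finset.sum_congr rfl fun i _ => ?_
  rw [Derivation.leibniz_pow, mkDerivation_X]
  simp only [nsmul_eq_mul, smul_eq_mul]
  ring

theorem nonrigid_of {n : ℕ} (a : Fin n → ℕ) (f : Fin n → MvPolynomial (Fin n) ℂ)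
    (hF : mkDerivation ℂ f (PBpoly a) = 0)
    (hnil : ∀ N : Subring (PBring ℂ a),
      (∀ p, pbmk a (mkDerivation ℂ f p) ∈ N → pbmk a p ∈ N) → ∀ i, pbmk a (X i) ∈ N)
    (hne : ∃ i, pbmk a (f i) ≠ 0) : NonRigid (PBring ℂ a) := by
  let E := mkDerivation ℂ f
  let φ : PBring ℂ a →+ PBring ℂ a :=
    AddMonoidHom.liftOfSurjective (pbmk a).toAddMonoidHom (pbmk_surj a)
      ⟨(pbmk a).toAddMonoidHom.comp (E : _ →ₗ[ℂ] _).toAddMonoidHom, by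
        intro p hp
        have hp' : pbmk a p = 0 := hp
        obtain ⟨q, rfl⟩ := (pbmk_eq_zero a p).1 hp'
        change pbmk a (E (PBpoly a * q)) = 0
        rw [Derivation.leibniz, hF, pbmk_eq_zero]
        simp⟩
  have hφ : ∀ p, φ (pbmk a p) = pbmk a (E p) := fun p =>
    AddMonoidHom.liftOfRightInverse_comp_apply _ _ _ _ p
  let D := mkDer φ (by
    intro x y
    obtain ⟨p, rfl⟩ := pbmk_surj a x
    obtain ⟨q, rfl⟩ := pbmk_surj a y
    rw [← map_mul, hφ, hφ, hφ, Derivation.leibniz, map_add, smul_eq_mul, smul_eq_mul, map_mul,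
      map_mul])
  have hD : ∀ p, D (pbmk a p) = pbmk a (E p) := fun p => (mkDer_apply _ _ _).trans (hφ p)
  have hder : ∀ p, pbmk a (E p) ∈ nilSub D → pbmk a p ∈ nilSub D := fun p h =>
    mem_nilSub_of_der (by rw [hD]; exact h)
  refine ⟨D, ?_, ?_⟩
  · have hall : ∀ p, pbmk a p ∈ nilSub D := by
      intro p
      induction p using MvPolynomial.induction_on with
      | C c => exact hder _ (by rw [derivation_C, map_zero]; exact zero_mem _)
      | add p q hp hq => rw [map_add]; exact add_mem hp hq
      | mul_X p i hp => rw [map_mul]; exact mul_mem hp (hnil _ hder i)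
    intro b
    obtain ⟨p, rfl⟩ := pbmk_surj a b
    exact mem_nilSub.1 (hall p)
  · intro h0
    obtain ⟨i, hi⟩ := hne
    apply hi
    have hX : D (pbmk a (X i)) = pbmk a (f i) := by rw [hD, mkDerivation_X]
    rw [← hX, h0]
    rfl

theorem nonrigid_one {n : ℕ} (hn : 3 ≤ n) (a : Fin n → ℕ) (ha : ∀ i, 1 ≤ a i) (i : Fin n)
    (hi : a i = 1) : NonRigid (PBring ℂ a) := by
  obtain ⟨j, hj⟩ := Fintype.exists_ne_of_one_lt_card
    (by simp; omega : 1 < Fintype.card (Fin n)) i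
  have hdom := PBring_isDomain hn a ha
  let f : Fin n → MvPolynomial (Fin n) ℂ := fun k =>
    if k = j then 1 else if k = i then -((a j : MvPolynomial (Fin n) ℂ) * X j ^ (a j - 1)) else 0
  have fj : f j = 1 := by simp [f]
  have fi : f i = -((a j : MvPolynomial (Fin n) ℂ) * X j ^ (a j - 1)) := by simp [f, hj.symm]
  have fk : ∀ k, k ≠ i → k ≠ j → f k = 0 := fun k h1 h2 => by simp [f, h1, h2]
  refine nonrigid_of a f ?_ ?_ ⟨j, by rw [fj, map_one]; exact one_ne_zero⟩
  · rw [mkDerivation_PBpoly, ← Finset.sum_subset (Finset.subset_univ {i, j})]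
    · rw [Finset.sum_pair hj.symm, fi, fj, hi]
      simp
    · intro k _ hk
      simp only [Finset.mem_insert, Finset.mem_singleton, not_or] at hk
      rw [fk k hk.1 hk.2, mul_zero]
  · intro N hder
    have h1 : pbmk a (X j) ∈ N := hder _ (by
      rw [mkDerivation_X, fj, map_one]; exact one_mem _)
    intro k
    by_cases hkj : k = j
    · rw [hkj]; exact h1
    · by_cases hki : k = i
      · refine hder _ ?_
        rw [hki, mkDerivation_X, fi, map_neg, map_mul, map_natCast, map_pow]
        exact neg_mem (mul_mem (natCast_mem _ _) (pow_mem h1 _))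
      · refine hder _ ?_
        rw [mkDerivation_X, fk k hki hkj, map_zero]; exact zero_mem _

theorem nonrigid_two {n : ℕ} (hn : 3 ≤ n) (a : Fin n → ℕ) (ha : ∀ i, 1 ≤ a i) (i j : Fin n)
    (hij : i ≠ j) (hi : a i = 2) (hj : a j = 2) : NonRigid (PBring ℂ a) := by
  obtain ⟨k, hki, hkj⟩ : ∃ k : Fin n, k ≠ i ∧ k ≠ j := by
    have : ∃ k, k ∉ ({i, j} : Finset (Fin n)) := by
      by_contra hcon
      push Not at hcon
      have h2 : (Finset.univ : Finset (Fin n)) ⊆ {i, j} := fun x _ => hcon x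
      have := Finset.card_le_card h2
      have h3 := Finset.card_le_two (a := i) (b := j)
      simp at this
      omega
    obtain ⟨k, hk⟩ := this
    simp at hk
    exact ⟨k, hk.1, hk.2⟩
  let G : MvPolynomial (Fin n) ℂ := (a k : MvPolynomial (Fin n) ℂ) * X k ^ (a k - 1)
  let U : MvPolynomial (Fin n) ℂ := X i + C Complex.I * X j
  have hI : (C Complex.I * C Complex.I : MvPolynomial (Fin n) ℂ) = -1 := by
    rw [← C_mul, Complex.I_mul_I, C_neg, C_1]
  let f : Fin n → MvPolynomial (Fin n) ℂ := fun l =>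
    if l = i then -G else if l = j then -(C Complex.I * G) else if l = k then 2 * U else 0
  have fi : f i = -G := by simp [f]
  have fj : f j = -(C Complex.I * G) := by simp [f, hij.symm]
  have fk : f k = 2 * U := by simp [f, hki, hkj]
  have fl : ∀ l, l ≠ i → l ≠ j → l ≠ k → f l = 0 := fun l h1 h2 h3 => by simp [f, h1, h2, h3]
  refine nonrigid_of a f ?_ ?_ ⟨k, ?_⟩
  · rw [mkDerivation_PBpoly, ← Finset.sum_subset (Finset.subset_univ {i, j, k})]
    · rw [Finset.sum_insert (by simp [hij, hki.symm]), Finset.sum_pair hkj.symm, fi, fj, fk, hi, hj]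
      change _ + (_ + G * (2 * U)) = 0
      simp only [U]
      push_cast
      ring
    · intro l _ hl
      simp only [Finset.mem_insert, Finset.mem_singleton, not_or] at hl
      rw [fl l hl.1 hl.2.1 hl.2.2, mul_zero]
  · intro N hder
    have hCI : ∀ c, pbmk a (C c) ∈ N := fun c =>
      hder _ (by rw [derivation_C, map_zero]; exact zero_mem _)
    have hU : pbmk a U ∈ N := hder _ (by
      have : mkDerivation ℂ f U = 0 := by
        simp only [U]
        rw [map_add, Derivation.leibniz, mkDerivation_X, mkDerivation_X, derivation_C, smul_zero,
          add_zero, fi, fj, smul_eq_mul]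
        linear_combination (-G) * hI
      rw [this, map_zero]; exact zero_mem _)
    have hk : pbmk a (X k) ∈ N := hder _ (by
      rw [mkDerivation_X, fk, map_mul]
      exact mul_mem (by rw [map_ofNat]; exact ofNat_mem _ 2) hU)
    have hG : pbmk a G ∈ N := by
      simp only [G]
      rw [map_mul, map_natCast, map_pow]
      exact mul_mem (natCast_mem _ _) (pow_mem hk _)
    intro l
    by_cases hli : l = i
    · refine hder _ ?_
      rw [hli, mkDerivation_X, fi, map_neg]; exact neg_mem hG
    by_cases hlj : l = j
    · refine hder _ ?_
      rw [hlj, mkDerivation_X, fj, map_neg, map_mul]; exact neg_mem (mul_mem (hCI _) hG)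
    by_cases hlk : l = k
    · rw [hlk]; exact hk
    refine hder _ ?_
    rw [mkDerivation_X, fl l hli hlj hlk, map_zero]; exact zero_mem _
  · rw [fk, Ne, pbmk_eq_zero]
    rintro ⟨q, hq⟩
    let v : Fin n → ℂ := fun l => if l = i then 1 else if l = j then -Complex.I else 0
    have vi : v i = 1 := by simp [v]
    have vj : v j = -Complex.I := by simp [v, hij.symm]
    have hP : eval v (PBpoly a) = 0 := by
      simp only [PBpoly, map_sum, map_pow, eval_X]
      rw [← Finset.sum_subset (Finset.subset_univ {i, j})]
      · rw [Finset.sum_pair hij, vi, vj, hi, hj]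
        simp
      · intro l _ hl
        simp only [Finset.mem_insert, Finset.mem_singleton, not_or] at hl
        have : v l = 0 := by simp [v, hl.1, hl.2]
        rw [this, zero_pow (by have := ha l; omega)]
    have h2 := congrArg (eval v) hq
    rw [map_mul, map_mul, hP, zero_mul] at h2
    simp [U, vi, vj] at h2

end PBnonrigid

section PBfinal

theorem mset_eq {B : Type*} [CommRing B] (𝒜 : ℤ → AddSubgroup B) (S : Set ℕ)
    (h1 : S ⊆ NRset 𝒜) (h2 : ∀ d ∈ NRset 𝒜, ∃ s ∈ S, s ∣ d)
    (h3 : ∀ s ∈ S, ∀ t ∈ S, s ∣ t → s = t) : MsetZ 𝒜 = S := by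
  ext d
  constructor
  · rintro ⟨hd, hm⟩
    obtain ⟨s, hs, hsd⟩ := h2 d hd
    rw [← hm s (h1 hs) hsd]; exact hs
  · intro hd
    refine ⟨h1 hd, fun e he hed => ?_⟩
    obtain ⟨s, hs, hse⟩ := h2 e he
    have := h3 s hs d hd (hse.trans hed)
    subst this
    exact Nat.dvd_antisymm hed hse

theorem PBexp_of_dvd {n : ℕ} (a : Fin n → ℕ) (ha : ∀ i, 1 ≤ a i) (s : ℕ) (i : Fin n)
    (h : ell a i ∣ s) : PBexp a s i = Nat.gcd (a i) (Lpart a i) := by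
  change _ * (ell a i / Nat.gcd s (ell a i)) = _
  rw [Nat.gcd_eq_right h, Nat.div_self (ell_pos a ha i), mul_one]

theorem NR_of_one {n : ℕ} (hn : 3 ≤ n) (a : Fin n → ℕ) (ha : ∀ i, 1 ≤ a i) (i : Fin n)
    (hi : Nat.gcd (a i) (Lpart a i) = 1) : ell a i ∈ NRset (PBpiece ℂ a) := by
  refine ⟨ell_pos a ha i, ?_⟩
  obtain ⟨e⟩ := verZ_iso a ha (ell a i) (Finset.dvd_prod_of_mem _ (Finset.mem_univ i))
  exact (nonrigid_one hn (PBexp a (ell a i)) (PBexp_pos a ha _) i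
    (by rw [PBexp_of_dvd a ha _ i dvd_rfl, hi])).congr e

theorem NR_of_two {n : ℕ} (hn : 3 ≤ n) (a : Fin n → ℕ) (ha : ∀ i, 1 ≤ a i) (i j : Fin n)
    (hij : i ≠ j) (hi : Nat.gcd (a i) (Lpart a i) = 2) (hj : Nat.gcd (a j) (Lpart a j) = 2) :
    ell a i * ell a j ∈ NRset (PBpiece ℂ a) := by
  refine ⟨Nat.mul_pos (ell_pos a ha i) (ell_pos a ha j), ?_⟩
  obtain ⟨e⟩ := verZ_iso a ha (ell a i * ell a j) (by
    rw [← Finset.prod_pair hij]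
    exact Finset.prod_dvd_prod_of_subset _ _ _ (Finset.subset_univ _))
  exact (nonrigid_two hn (PBexp a (ell a i * ell a j)) (PBexp_pos a ha _) i j hij
    (by rw [PBexp_of_dvd a ha _ i (dvd_mul_right _ _), hi])
    (by rw [PBexp_of_dvd a ha _ j (dvd_mul_left _ _), hj])).congr e

theorem NR_necessary {n : ℕ} (hn : 3 ≤ n) (a : Fin n → ℕ) (ha : ∀ i, 1 ≤ a i)
    (hrigid : ∀ d : ℕ, 0 < d → d ∣ ∏ i : Fin n, Ltot a / Lpart a i →
      GammaCond (PBexp a d) →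
      ∀ D : Derivation ℤ (PBring ℂ (PBexp a d)) (PBring ℂ (PBexp a d)),
        IsLND D → D = 0) (d : ℕ) (hd : d ∈ NRset (PBpiece ℂ a)) :
    (∃ i, Nat.gcd (a i) (Lpart a i) = 1 ∧ ell a i ∣ d) ∨
    ∃ i j, i ≠ j ∧ Nat.gcd (a i) (Lpart a i) = 2 ∧ Nat.gcd (a j) (Lpart a j) = 2 ∧
      ell a i ∣ d ∧ ell a j ∣ d := by
  obtain ⟨hd1, hNR⟩ := hd
  set P := ∏ i, ell a i with hP
  set g := Nat.gcd d P with hgdef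
  have hgP : g ∣ P := Nat.gcd_dvd_right _ _
  have hgd : g ∣ d := Nat.gcd_dvd_left _ _
  have hg0 : 0 < g := Nat.gcd_pos_of_pos_left _ hd1
  have h1 : NonRigid (verZ (PBpiece ℂ a) g) := lift_PB hn a ha d hd1 g hgd
    (fun i => Nat.gcd_dvd_gcd_of_dvd_right d (Finset.dvd_prod_of_mem _ (Finset.mem_univ i))) hNR
  obtain ⟨e⟩ := verZ_iso a ha g hgP
  obtain ⟨D, hD, hD0⟩ := h1.congr e.symm
  have hΓ : ¬ GammaCond (PBexp a g) := fun h => hD0 (hrigid g hg0 hgP h D hD)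
  have hq : ∀ i, PBexp a g i = Nat.gcd (a i) (Lpart a i) * (ell a i / Nat.gcd g (ell a i)) :=
    fun i => rfl
  have hdv : ∀ i, ell a i / Nat.gcd g (ell a i) = 1 → ell a i ∣ d := fun i h => by
    have := Nat.div_mul_cancel (Nat.gcd_dvd_right g (ell a i))
    rw [h, one_mul] at this
    rw [← this]
    exact (Nat.gcd_dvd_left _ _).trans hgd
  have hexp : ∀ i, PBexp a g i ∣ a i := fun i => ⟨_, by rw [mul_comm, PBexp_mul a ha]⟩
  have htwo : ∀ i j, i ≠ j → PBexp a g i = 2 → PBexp a g j = 2 →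
      Nat.gcd (a i) (Lpart a i) = 2 ∧ ell a i ∣ d := by
    intro i j hij hi hj
    have h2i : 2 ∣ a i := hi ▸ hexp i
    have h2j : 2 ∣ Lpart a i := (hj ▸ hexp j : 2 ∣ a j).trans (dvd_Lpart a hij.symm)
    have h2 : 2 ∣ Nat.gcd (a i) (Lpart a i) := Nat.dvd_gcd h2i h2j
    have h3 := hq i
    rw [hi] at h3
    have h4 : Nat.gcd (a i) (Lpart a i) = 2 :=
      Nat.dvd_antisymm ⟨_, h3⟩ h2
    rw [h4] at h3
    exact ⟨h4, hdv i (by omega)⟩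
  rw [GammaCond, not_and_or] at hΓ
  rcases hΓ with h | h
  · left
    push Not at h
    obtain ⟨i, hi⟩ := h
    have h0 := PBexp_pos a ha g i
    have h3 : PBexp a g i = 1 := by omega
    rw [hq i] at h3
    exact ⟨i, Nat.eq_one_of_mul_eq_one_right h3, hdv i (Nat.eq_one_of_mul_eq_one_left h3)⟩
  · right
    push Not at h
    obtain ⟨i, j, hi, hj, hij⟩ := h
    obtain ⟨h5, h6⟩ := htwo i j hij hi hj
    obtain ⟨h7, h8⟩ := htwo j i hij.symm hj hi
    exact ⟨i, j, hij, h5, h7, h6, h8⟩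

end PBfinal

/-- Let n ≥ 3 and (a₁,…,aₙ) ∈ Γₙ.  Assume that for every positive divisor d of
∏ᵢ (L/Lᵢ) with f(d) ∈ Γₙ the Pham–Brieskorn ring B_{ℂ;f(d)} is rigid, where
f(d) = (a₁′,…,aₙ′) with aᵢ′ = gcd(aᵢ,Lᵢ)·((L/Lᵢ)/gcd(d,L/Lᵢ)).  For ν ∈ {1,2} let
I_ν = { i : gcd(aᵢ,Lᵢ) = ν }.  Then at most one i₀ ∈ I₂ has a_{i₀} = 2, and
M(B_{ℂ;a}) is { aᵢ : i ∈ I₁ } ∪ { aᵢaⱼ/4 : i ≠ j ∈ I₂ } if no such i₀ exists, and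
{ aᵢ : i ∈ I₁ } ∪ { aᵢ/2 : i ∈ I₂ \ {i₀} } if i₀ exists. -/
theorem PhamBrieskorn_Mset
    (n : ℕ) (hn : 3 ≤ n) (a : Fin n → ℕ) (hGamma : GammaCond a)
    (hrigid : ∀ d : ℕ, 0 < d → d ∣ ∏ i : Fin n, Ltot a / Lpart a i →
      GammaCond (PBexp a d) →
      ∀ D : Derivation ℤ (PBring ℂ (PBexp a d)) (PBring ℂ (PBexp a d)),
        IsLND D → D = 0) :
    (∀ i j : Fin n,
      (Nat.gcd (a i) (Lpart a i) = 2 ∧ a i = 2) →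
      (Nat.gcd (a j) (Lpart a j) = 2 ∧ a j = 2) → i = j) ∧
    ((¬ ∃ i : Fin n, Nat.gcd (a i) (Lpart a i) = 2 ∧ a i = 2) →
      MsetZ (PBpiece ℂ a) =
        { m : ℕ | ∃ i : Fin n, Nat.gcd (a i) (Lpart a i) = 1 ∧ m = a i } ∪
        { m : ℕ | ∃ i j : Fin n, Nat.gcd (a i) (Lpart a i) = 2 ∧
            Nat.gcd (a j) (Lpart a j) = 2 ∧ i ≠ j ∧ m = a i * a j / 4 }) ∧
    (∀ i₀ : Fin n, Nat.gcd (a i₀) (Lpart a i₀) = 2 → a i₀ = 2 →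
      MsetZ (PBpiece ℂ a) =
        { m : ℕ | ∃ i : Fin n, Nat.gcd (a i) (Lpart a i) = 1 ∧ m = a i } ∪
        { m : ℕ | ∃ i : Fin n, Nat.gcd (a i) (Lpart a i) = 2 ∧ i ≠ i₀ ∧ m = a i / 2 }) := by
  have ha : ∀ i, 1 ≤ a i := fun i => le_trans one_le_two (hGamma.1 i)
  have e1 : ∀ i, Nat.gcd (a i) (Lpart a i) = 1 → a i = ell a i := fun i h => by
    have := gcd_mul_ell a ha i
    rw [h, one_mul] at this
    exact this.symm
  have e2 : ∀ i, Nat.gcd (a i) (Lpart a i) = 2 → a i = 2 * ell a i := fun i h => by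
    have := gcd_mul_ell a ha i
    rw [h] at this
    exact this.symm
  have e3 : ∀ i j, Nat.gcd (a i) (Lpart a i) = 2 → Nat.gcd (a j) (Lpart a j) = 2 →
      a i * a j / 4 = ell a i * ell a j := fun i j hi hj => by
    have h4 : a i * a j = 4 * (ell a i * ell a j) := by rw [e2 i hi, e2 j hj]; ring
    rw [h4]
    exact Nat.mul_div_cancel_left _ (by norm_num)
  have e4 : ∀ i, Nat.gcd (a i) (Lpart a i) = 2 → a i / 2 = ell a i := fun i hi => by
    have := e2 i hi
    omega
  have l1 : ∀ i, Nat.gcd (a i) (Lpart a i) = 1 → ell a i ≠ 1 := fun i h h' => by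
    have := e1 i h
    have := hGamma.1 i
    omega
  have l2 : ∀ i, Nat.gcd (a i) (Lpart a i) = 2 → a i ≠ 2 → ell a i ≠ 1 := fun i h h' h'' => by
    have := e2 i h
    omega
  have single : ∀ i j, ell a i ≠ 1 → ell a i ∣ ell a j → i = j := fun i j h hd => by
    by_contra hij
    exact h (Nat.Coprime.eq_one_of_dvd (ell_coprime a ha hij) hd)
  have double : ∀ i j k, ell a i ≠ 1 → ell a i ∣ ell a j * ell a k → i = j ∨ i = k :=
    fun i j k h hd => by
      by_contra hij
      push Not at hij
      exact h (Nat.Coprime.eq_one_of_dvd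
        ((ell_coprime a ha hij.1).mul_right (ell_coprime a ha hij.2)) hd)
  refine ⟨fun i j hi hj => hGamma.2 i j hi.2 hj.2, ?_, ?_⟩
  · intro hno
    have l2' : ∀ i, Nat.gcd (a i) (Lpart a i) = 2 → ell a i ≠ 1 := fun i h =>
      l2 i h fun h' => hno ⟨i, h, h'⟩
    apply mset_eq
    · rintro m (⟨i, hi, rfl⟩ | ⟨i, j, hi, hj, hij, rfl⟩)
      · rw [e1 i hi]; exact NR_of_one hn a ha i hi
      · rw [e3 i j hi hj]; exact NR_of_two hn a ha i j hij hi hj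
    · intro d hd
      rcases NR_necessary hn a ha hrigid d hd with ⟨i, hi, h⟩ | ⟨i, j, hij, hi, hj, h, h'⟩
      · exact ⟨a i, Or.inl ⟨i, hi, rfl⟩, by rw [e1 i hi]; exact h⟩
      · exact ⟨a i * a j / 4, Or.inr ⟨i, j, hi, hj, hij, rfl⟩, by
          rw [e3 i j hi hj]; exact (ell_coprime a ha hij).mul_dvd_of_dvd_of_dvd h h'⟩
    · rintro s (⟨i, hi, rfl⟩ | ⟨i, j, hi, hj, hij, rfl⟩) t
        (⟨k, hk, rfl⟩ | ⟨k, l, hk, hl, hkl, rfl⟩) hst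
      · rw [e1 i hi, e1 k hk] at hst
        rw [single i k (l1 i hi) hst]
      · rw [e1 i hi, e3 k l hk hl] at hst
        exfalso
        rcases double i k l (l1 i hi) hst with rfl | rfl <;> omega
      · rw [e3 i j hi hj, e1 k hk] at hst
        have := single i k (l2' i hi) ((dvd_mul_right _ _).trans hst)
        subst this
        omega
      · rw [e3 i j hi hj, e3 k l hk hl] at hst ⊢
        have h1 := double i k l (l2' i hi) ((dvd_mul_right _ _).trans hst)
        have h2 := double j k l (l2' j hj) ((dvd_mul_left _ _).trans hst)
        rcases h1 with rfl | rfl <;> rcases h2 with rfl | rfl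
        · exact absurd rfl hij
        · rfl
        · exact mul_comm _ _
        · exact absurd rfl hij
  · intro i₀ hi₀ hi₀2
    have hl0 : ell a i₀ = 1 := by
      have := e2 i₀ hi₀
      omega
    have l2' : ∀ i, Nat.gcd (a i) (Lpart a i) = 2 → i ≠ i₀ → ell a i ≠ 1 := fun i h h' =>
      l2 i h fun h'' => h' (hGamma.2 i i₀ h'' hi₀2)
    apply mset_eq
    · rintro m (⟨i, hi, rfl⟩ | ⟨i, hi, hij, rfl⟩)
      · rw [e1 i hi]; exact NR_of_one hn a ha i hi
      · have := NR_of_two hn a ha i i₀ hij hi hi₀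
        rw [hl0, mul_one] at this
        rw [e4 i hi]; exact this
    · intro d hd
      rcases NR_necessary hn a ha hrigid d hd with ⟨i, hi, h⟩ | ⟨i, j, hij, hi, hj, h, h'⟩
      · exact ⟨a i, Or.inl ⟨i, hi, rfl⟩, by rw [e1 i hi]; exact h⟩
      · by_cases hii : i = i₀
        · exact ⟨a j / 2, Or.inr ⟨j, hj, fun hj0 => hij (hii.trans hj0.symm), rfl⟩, by
            rw [e4 j hj]; exact h'⟩
        · exact ⟨a i / 2, Or.inr ⟨i, hi, hii, rfl⟩, by rw [e4 i hi]; exact h⟩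
    · have key : ∀ s ∈ ({ m : ℕ | ∃ i : Fin n, Nat.gcd (a i) (Lpart a i) = 1 ∧ m = a i } ∪
        { m : ℕ | ∃ i : Fin n, Nat.gcd (a i) (Lpart a i) = 2 ∧ i ≠ i₀ ∧ m = a i / 2 }),
          ∃ i, ell a i ≠ 1 ∧ s = ell a i := by
        rintro s (⟨i, hi, rfl⟩ | ⟨i, hi, hij, rfl⟩)
        · exact ⟨i, l1 i hi, e1 i hi⟩
        · exact ⟨i, l2' i hi hij, e4 i hi⟩
      intro s hs t ht hst
      obtain ⟨i, hi, rfl⟩ := key s hs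
      obtain ⟨j, _, rfl⟩ := key t ht
      rw [single i j hi hst]
end
end
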